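/- (Transferability) Let ν be the standard Gaussian on ℝ^d, and let {B_i(f)}, {B_i(h)} be two measurable K-partitions of ℝ^d with ν({z : label_f(z) ≠ label_h(z)}) ≤ δ and ν(B_i(f)) + δ ≤ 1/2 for all i. Then for every η ≥ 0, ν({z : ∃ z' with ‖z - z'‖₂ ≤ η such that z' lies outside both the f-cell and the h-cell containing z}) ≥ 1 - √(π/2)·e^{-η²/2} - 2δ. -/

import Mathlib

open Real Set MeasureTheory ProbabilityTheory

/-- The standard normal cumulative distribution function. -/
noncomputable def Phi (x : ℝ) : ℝ :=
  (Real.sqrt (2 * π))⁻¹ * ∫ u in Set.Iic x, Real.exp (-u ^ 2 / 2)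

/-- The inverse of the standard normal cdf. -/
noncomputable def PhiInv : ℝ → ℝ := Function.invFun Phi

/-- The standard Gaussian measure `N(0, I_d)` on `ℝ^d`. -/
noncomputable def stdGaussian (d : ℕ) : Measure (Fin d → ℝ) :=
  Measure.pi fun _ => gaussianReal 0 1

/-- The Euclidean (ℓ₂) norm on `ℝ^d`. -/
noncomputable def l2 {d : ℕ} (z : Fin d → ℝ) : ℝ := Real.sqrt (∑ i, z i ^ 2)

/-- The ℓ₂ distance from a point to a set. -/
noncomputable def distSet {d : ℕ} (z : Fin d → ℝ) (A : Set (Fin d → ℝ)) : ℝ :=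
  sInf {t | ∃ z' ∈ A, t = l2 (z - z')}

/-!
Let `I = φ ∘ Φ⁻¹` be the Gaussian isoperimetric profile. Along a solution `u(t, x)` of the backward
heat equation with values in `(0, 1)`, the function `√(I(u)² + t uₓ²)` is a subsolution, so its
value at the origin at time `0` is at most its Gaussian average at time `1`. This is Bobkov's
inequality on the line; Minkowski's inequality tensorizes it to `ℝᵈ`. Applied to `Φ(u - s)` for an
`L`-Lipschitz `u`, it is a differential inequality for `s ↦ Φ⁻¹(∫ Φ(u - s))`. With `u` a large
multiple of the distance to the complement of `U`, this bounds the Gaussian measure of the points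
of `U` at depth `r` by `Φ(a - r)` whenever `U` has measure at most `Φ(a)`, hence by `exp(-r²/2)`
times the measure of `U` if `U` has measure at most `1 / 2`.

A point that no perturbation of norm at most `η` moves out of both of its cells either carries two
different labels or has depth at least `η` in one of the sets `Bf i ∪ Bh i`. These sets have
measure at most `1 / 2` and their measures sum to at most `1 + δ`.
-/

open Filter Topology

local notation "γ" => gaussianReal 0 1
local notation "φ" => gaussianPDFReal 0 1

section ScalarGaussian

lemma continuous_gaussianPDFReal_std : Continuous φ := by
  rw [gaussianPDFReal_def]
  fun_prop

lemma gaussianPDFReal_std_pos (x : ℝ) : 0 < φ x := gaussianPDFReal_pos 0 1 x one_ne_zero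

lemma hasDerivAt_gaussianPDFReal_std (x : ℝ) : HasDerivAt φ (-x * φ x) x := by
  have h : HasDerivAt (fun y : ℝ ↦ -(y - 0) ^ 2 / (2 * ((1 : NNReal) : ℝ))) (-x) x := by
    refine ((((hasDerivAt_id x).sub_const 0).pow 2).neg.div_const _).congr_deriv ?_
    simp only [id, NNReal.coe_one]
    ring
  rw [gaussianPDFReal_def]
  exact (h.exp.const_mul (√(2 * π * ((1 : NNReal) : ℝ)))⁻¹).congr_deriv (by ring)

lemma Phi_eq_setIntegral (x : ℝ) : Phi x = ∫ u in Iic x, φ u := by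
  rw [Phi, ← integral_const_mul]
  simp [gaussianPDFReal_def]

lemma Phi_eq_cdf (x : ℝ) : Phi x = cdf γ x := by
  rw [cdf_eq_real, Measure.real, gaussianReal_apply_eq_integral 0 one_ne_zero, Phi_eq_setIntegral,
    ENNReal.toReal_ofReal (integral_nonneg fun u ↦ gaussianPDFReal_nonneg 0 1 u)]

lemma hasDerivAt_Phi (x : ℝ) : HasDerivAt Phi (φ x) x := by
  have hint : ∀ a : ℝ, IntegrableOn φ (Iic a) := fun a ↦
    (integrable_gaussianPDFReal 0 1).integrableOn
  have h : Phi = fun y ↦ Phi 0 + ∫ u in (0 : ℝ)..y, φ u := by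
    funext y
    rw [← intervalIntegral.integral_Iic_sub_Iic (hint 0) (hint y), ← Phi_eq_setIntegral,
      ← Phi_eq_setIntegral, add_sub_cancel]
  rw [h]
  exact (continuous_gaussianPDFReal_std.integral_hasStrictDerivAt 0 x).hasDerivAt.const_add _

lemma continuous_Phi : Continuous Phi :=
  continuous_iff_continuousAt.2 fun x ↦ (hasDerivAt_Phi x).continuousAt

lemma strictMono_Phi : StrictMono Phi :=
  strictMono_of_hasDerivAt_pos hasDerivAt_Phi gaussianPDFReal_std_pos

lemma tendsto_Phi_atBot : Tendsto Phi atBot (𝓝 0) :=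
  funext Phi_eq_cdf ▸ tendsto_cdf_atBot _

lemma tendsto_Phi_atTop : Tendsto Phi atTop (𝓝 1) :=
  funext Phi_eq_cdf ▸ tendsto_cdf_atTop _

lemma Phi_pos (x : ℝ) : 0 < Phi x :=
  (Phi_eq_cdf (x - 1) ▸ cdf_nonneg _ _ : 0 ≤ Phi (x - 1)).trans_lt (strictMono_Phi (by simp))

lemma Phi_lt_one (x : ℝ) : Phi x < 1 :=
  (strictMono_Phi (by simp)).trans_le (Phi_eq_cdf (x + 1) ▸ cdf_le_one _ _ : Phi (x + 1) ≤ 1)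

lemma Phi_mem_Ioo (x : ℝ) : Phi x ∈ Ioo 0 1 := ⟨Phi_pos x, Phi_lt_one x⟩

lemma Phi_neg (x : ℝ) : Phi (-x) = 1 - Phi x := by
  have hsymm : ∫ u in Iic (-x), φ u = ∫ u in Ioi x, φ u := by
    simpa [gaussianPDFReal_def] using integral_comp_neg_Iic (-x) φ
  rw [Phi_eq_setIntegral, Phi_eq_setIntegral, hsymm, eq_sub_iff_add_eq', ← compl_Iic,
    integral_add_compl measurableSet_Iic (integrable_gaussianPDFReal 0 1),
    integral_gaussianPDFReal_eq_one 0 one_ne_zero]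

lemma Phi_zero : Phi 0 = 1 / 2 := by
  have h := Phi_neg 0
  rw [neg_zero] at h
  linarith

lemma PhiInv_Phi (x : ℝ) : PhiInv (Phi x) = x :=
  Function.leftInverse_invFun strictMono_Phi.injective x

lemma exists_Phi_eq {p : ℝ} (hp : p ∈ Ioo 0 1) : ∃ x, Phi x = p :=
  mem_range_of_exists_le_of_exists_ge continuous_Phi
    ((tendsto_Phi_atBot.eventually_le_const hp.1).exists)
    ((tendsto_Phi_atTop.eventually_const_le hp.2).exists)

lemma Phi_PhiInv {p : ℝ} (hp : p ∈ Ioo 0 1) : Phi (PhiInv p) = p :=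
  Function.invFun_eq (exists_Phi_eq hp)

lemma strictMonoOn_PhiInv : StrictMonoOn PhiInv (Ioo 0 1) := fun p hp q hq h ↦ by
  rwa [← strictMono_Phi.lt_iff_lt, Phi_PhiInv hp, Phi_PhiInv hq]

lemma hasDerivAt_PhiInv {p : ℝ} (hp : p ∈ Ioo 0 1) :
    HasDerivAt PhiInv (φ (PhiInv p))⁻¹ p := by
  have hnhds : Ioo (0 : ℝ) 1 ∈ 𝓝 p := Ioo_mem_nhds hp.1 hp.2
  have himage : PhiInv '' Ioo 0 1 = univ :=
    eq_univ_of_forall fun x ↦ ⟨Phi x, Phi_mem_Ioo x, PhiInv_Phi x⟩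
  refine HasDerivAt.of_local_left_inverse
    (strictMonoOn_PhiInv.continuousAt_of_image_mem_nhds hnhds (himage ▸ univ_mem))
    (hasDerivAt_Phi _) (gaussianPDFReal_std_pos _).ne' ?_
  filter_upwards [hnhds] with q hq using Phi_PhiInv hq

/-- The Gaussian isoperimetric profile `I = φ ∘ Φ⁻¹`: the Gaussian surface measure of a half-space
as a function of its Gaussian measure. -/
noncomputable def isoProfile (p : ℝ) : ℝ := φ (PhiInv p)

lemma isoProfile_pos (p : ℝ) : 0 < isoProfile p := gaussianPDFReal_std_pos _

lemma isoProfile_Phi (x : ℝ) : isoProfile (Phi x) = φ x := by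
  rw [isoProfile, PhiInv_Phi]

lemma hasDerivAt_isoProfile {p : ℝ} (hp : p ∈ Ioo 0 1) :
    HasDerivAt isoProfile (-PhiInv p) p := by
  have hpos := gaussianPDFReal_std_pos (PhiInv p)
  refine ((hasDerivAt_gaussianPDFReal_std _).comp p (hasDerivAt_PhiInv hp)).congr_deriv ?_
  field_simp

lemma Phi_sub_le {a r : ℝ} (ha : a ≤ 0) (hr : 0 ≤ r) :
    Phi (a - r) ≤ exp (-r ^ 2 / 2) * Phi a := by
  let k : ℝ → ℝ := fun x ↦ exp (-r ^ 2 / 2) * Phi x - Phi (x - r)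
  have hk : ∀ x, HasDerivAt k (exp (-r ^ 2 / 2) * φ x - φ (x - r)) x := fun x ↦
    ((hasDerivAt_Phi x).const_mul _).sub ((hasDerivAt_Phi (x - r)).comp_sub_const x r)
  have hk' : ∀ x ≤ 0, 0 ≤ exp (-r ^ 2 / 2) * φ x - φ (x - r) := fun x hx ↦ by
    simp only [gaussianPDFReal_def, NNReal.coe_one, sub_nonneg]
    rw [mul_left_comm, ← Real.exp_add]
    gcongr
    nlinarith [mul_nonneg hr (neg_nonneg.2 hx)]
  have hmono : MonotoneOn k (Iic 0) :=
    monotoneOn_of_hasDerivWithinAt_nonneg (convex_Iic 0)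
      (fun x _ ↦ (hk x).continuousAt.continuousWithinAt) (fun x _ ↦ (hk x).hasDerivWithinAt)
      fun x hx ↦ hk' x (interior_subset (s := Iic 0) hx)
  have hlim : Tendsto k atBot (𝓝 (exp (-r ^ 2 / 2) * 0 - 0)) :=
    (tendsto_Phi_atBot.const_mul _).sub
      (tendsto_Phi_atBot.comp (tendsto_atBot_add_const_right _ (-r) tendsto_id))
  have hka : exp (-r ^ 2 / 2) * 0 - 0 ≤ k a := by
    refine le_of_tendsto hlim ?_
    filter_upwards [eventually_le_atBot a] with x hx using hmono (hx.trans ha) ha hx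
  simp only [k] at hka
  linarith

lemma integral_mul_gaussianReal_eq_integral_deriv {h h' : ℝ → ℝ} {C C' : ℝ}
    (hd : ∀ x, HasDerivAt h (h' x) x) (hc : Continuous h')
    (hb : ∀ x, |h x| ≤ C) (hb' : ∀ x, |h' x| ≤ C') :
    ∫ x, x * h x ∂γ = ∫ x, h' x ∂γ := by
  have hm : AEStronglyMeasurable h :=
    (continuous_iff_continuousAt.2 fun x ↦ (hd x).continuousAt).aestronglyMeasurable
  have hi : Integrable fun x ↦ φ x * x := by
    have h1 : Integrable (fun x : ℝ ↦ x) γ :=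
      memLp_one_iff_integrable.1 (memLp_id_gaussianReal 1)
    rw [gaussianReal_of_var_ne_zero 0 one_ne_zero,
      integrable_withDensity_iff_integrable_smul' (measurable_gaussianPDF 0 1)
        (ae_of_all _ fun _ ↦ gaussianPDF_lt_top)] at h1
    simpa [toReal_gaussianPDF] using h1
  have hparts : ∫ x, h x * (-x * φ x) = -∫ x, h' x * φ x :=
    integral_mul_deriv_eq_deriv_mul_of_integrable
      (fun x _ ↦ hd x) (fun x _ ↦ hasDerivAt_gaussianPDFReal_std x)
      ((hi.neg.bdd_mul hm (ae_of_all _ hb)).congr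
        (ae_of_all _ fun x ↦ by simp only [Pi.mul_apply, Pi.neg_apply]; ring))
      ((integrable_gaussianPDFReal 0 1).bdd_mul hc.aestronglyMeasurable (ae_of_all _ hb'))
      ((integrable_gaussianPDFReal 0 1).bdd_mul hm (ae_of_all _ hb))
  simp only [integral_gaussianReal_eq_integral_smul one_ne_zero, smul_eq_mul]
  calc ∫ x, φ x * (x * h x) = -∫ x, h x * (-x * φ x) := by
        rw [← integral_neg]
        exact integral_congr_ae (ae_of_all _ fun x ↦ by ring)
    _ = ∫ x, φ x * h' x := by
        rw [hparts, neg_neg]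
        exact integral_congr_ae (ae_of_all _ fun x ↦ mul_comm _ _)

end ScalarGaussian

section BoundedContinuous

variable {X E F : Type*} [TopologicalSpace X] [NormedAddCommGroup E] [NormedAddCommGroup F]

/-- `f` is continuous and bounded on `s`. -/
structure BddContOn (f : X → E) (s : Set X) : Prop where
  continuousOn : ContinuousOn f s
  exists_bound : ∃ C, ∀ x ∈ s, ‖f x‖ ≤ C

lemma bddContOn_const (c : E) (s : Set X) : BddContOn (fun _ : X ↦ c) s :=
  ⟨continuousOn_const, ‖c‖, fun _ _ ↦ le_rfl⟩

namespace BddContOn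

variable {s t : Set X}

lemma mono {f : X → E} (hf : BddContOn f t) (h : s ⊆ t) : BddContOn f s :=
  ⟨hf.continuousOn.mono h, hf.exists_bound.imp fun _ hC x hx ↦ hC x (h hx)⟩

lemma comp_continuous {Y : Type*} [TopologicalSpace Y] {f : X → E} {g : Y → X} {u : Set Y}
    (hf : BddContOn f s) (hg : Continuous g) (hgs : MapsTo g u s) : BddContOn (f ∘ g) u :=
  ⟨hf.continuousOn.comp hg.continuousOn hgs, hf.exists_bound.imp fun _ hC _ hy ↦ hC _ (hgs hy)⟩

lemma continuous {f : X → E} (hf : BddContOn f univ) : Continuous f :=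
  continuousOn_univ.1 hf.continuousOn

lemma prodMk {f : X → E} {g : X → F} (hf : BddContOn f s) (hg : BddContOn g s) :
    BddContOn (fun x ↦ (f x, g x)) s := by
  obtain ⟨A, hA⟩ := hf.exists_bound
  obtain ⟨B, hB⟩ := hg.exists_bound
  exact ⟨hf.continuousOn.prodMk hg.continuousOn, max A B, fun x hx ↦
    max_le_max (hA x hx) (hB x hx)⟩

lemma continuousOn_comp [ProperSpace E] {f : X → E} {g : E → F} {S : Set E} (hf : BddContOn f s)
    (hg : ContinuousOn g S) (hS : IsClosed S) (hfS : MapsTo f s S) :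
    BddContOn (fun x ↦ g (f x)) s := by
  obtain ⟨C, hC⟩ := hf.exists_bound
  have hcompact : IsCompact (Metric.closedBall 0 C ∩ S) :=
    (isCompact_closedBall 0 C).inter_right hS
  obtain ⟨D, hD⟩ := hcompact.exists_bound_of_continuousOn (hg.mono inter_subset_right)
  exact ⟨hg.comp hf.continuousOn hfS, D, fun x hx ↦
    hD _ ⟨mem_closedBall_zero_iff.2 (hC x hx), hfS hx⟩⟩

lemma add {f g : X → ℝ} (hf : BddContOn f s) (hg : BddContOn g s) :
    BddContOn (fun x ↦ f x + g x) s :=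
  (hf.prodMk hg).continuousOn_comp continuous_add.continuousOn isClosed_univ (mapsTo_univ _ _)

lemma mul {f g : X → ℝ} (hf : BddContOn f s) (hg : BddContOn g s) :
    BddContOn (fun x ↦ f x * g x) s :=
  (hf.prodMk hg).continuousOn_comp continuous_mul.continuousOn isClosed_univ (mapsTo_univ _ _)

lemma pow {f : X → ℝ} (hf : BddContOn f s) (n : ℕ) : BddContOn (fun x ↦ f x ^ n) s :=
  hf.continuousOn_comp (continuous_pow n).continuousOn isClosed_univ (mapsTo_univ _ _)

lemma sqrt {f : X → ℝ} (hf : BddContOn f s) : BddContOn (fun x ↦ √(f x)) s :=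
  hf.continuousOn_comp Real.continuous_sqrt.continuousOn isClosed_univ (mapsTo_univ _ _)

lemma sum {ι : Type*} {S : Finset ι} {f : ι → X → ℝ} (hf : ∀ i, BddContOn (f i) s) :
    BddContOn (fun x ↦ ∑ i ∈ S, f i x) s := by
  induction S using Finset.cons_induction with
  | empty => simpa using bddContOn_const 0 s
  | cons i S hi ih => simpa only [Finset.sum_cons] using (hf i).add ih

section Integral

variable [MeasurableSpace X] [OpensMeasurableSpace X]
  {μ : Measure X} [IsFiniteMeasure μ]

lemma integrable {f : X → ℝ} (hf : BddContOn f univ) : Integrable f μ := by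
  obtain ⟨C, hC⟩ := hf.exists_bound
  exact Integrable.of_bound hf.continuous.aestronglyMeasurable C (ae_of_all _ fun x ↦ hC x trivial)

lemma integral_right {Y : Type*} [TopologicalSpace Y] [FirstCountableTopology Y] {f : Y × X → ℝ}
    {u : Set Y} (hf : BddContOn f (u ×ˢ univ)) : BddContOn (fun y ↦ ∫ x, f (y, x) ∂μ) u := by
  obtain ⟨C, hC⟩ := hf.exists_bound
  have hbound : ∀ y ∈ u, ∀ x, ‖f (y, x)‖ ≤ C := fun y hy x ↦ hC _ ⟨hy, trivial⟩
  refine ⟨continuousOn_of_dominated (bound := fun _ ↦ C) (fun y hy ↦ ?_)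
    (fun y hy ↦ ae_of_all _ (hbound y hy)) (integrable_const _) (ae_of_all _ fun x ↦ ?_),
    C * μ.real univ, fun y hy ↦ norm_integral_le_of_norm_le_const (ae_of_all _ (hbound y hy))⟩
  · exact (hf.continuousOn.comp_continuous (by fun_prop : Continuous fun x ↦ (y, x))
      fun x ↦ ⟨hy, trivial⟩).aestronglyMeasurable
  · exact hf.continuousOn.comp (by fun_prop : Continuous fun y ↦ (y, x)).continuousOn
      fun y hy ↦ ⟨hy, trivial⟩

end Integral

end BddContOn

end BoundedContinuous

section HeatOperator

/-- `Kt`, `Kx` and `Kxx` are the first partial derivatives and the second space derivative of `K`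
on the strip `I × ℝ`, and all four functions are continuous and bounded there. -/
structure HasHeatDerivsOn (K Kt Kx Kxx : ℝ → ℝ → ℝ) (I : Set ℝ) : Prop where
  hasDerivAt_time : ∀ t ∈ I, ∀ x, HasDerivAt (K · x) (Kt t x) t
  hasDerivAt_space : ∀ t ∈ I, ∀ x, HasDerivAt (K t) (Kx t x) x
  hasDerivAt_space₂ : ∀ t ∈ I, ∀ x, HasDerivAt (Kx t) (Kxx t x) x
  bddContOn : BddContOn ↿K (I ×ˢ univ)
  bddContOn_time : BddContOn ↿Kt (I ×ˢ univ)
  bddContOn_space : BddContOn ↿Kx (I ×ˢ univ)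
  bddContOn_space₂ : BddContOn ↿Kxx (I ×ˢ univ)

variable {K Kt Kx Kxx : ℝ → ℝ → ℝ} {I : Set ℝ}

lemma BddContOn.slice (hK : BddContOn ↿K (I ×ˢ univ)) {t : ℝ} (ht : t ∈ I) (c : ℝ) :
    BddContOn (fun z ↦ K t (c * z)) univ :=
  hK.comp_continuous (by fun_prop : Continuous fun z ↦ (t, c * z)) fun _ _ ↦ ⟨ht, trivial⟩

lemma bddContOn_fst (hI : Bornology.IsBounded I) :
    BddContOn (fun p : ℝ × ℝ ↦ p.1) (I ×ˢ univ) :=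
  ⟨continuous_fst.continuousOn, hI.exists_norm_le.imp fun _ hC p hp ↦ hC p.1 hp.1⟩

namespace HasHeatDerivsOn

lemma hasFDerivAt (hK : HasHeatDerivsOn K Kt Kx Kxx I) (hI : IsOpen I) {t : ℝ} (ht : t ∈ I)
    (x : ℝ) : HasFDerivAt ↿K ((ContinuousLinearMap.toSpanSingleton ℝ (Kt t x)).coprod
      (ContinuousLinearMap.toSpanSingleton ℝ (Kx t x))) (t, x) := by
  have hnhds : I ×ˢ univ ∈ 𝓝 (t, x) := prod_mem_nhds (hI.mem_nhds ht) univ_mem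
  have hspan : Continuous fun c : ℝ ↦ ContinuousLinearMap.toSpanSingleton ℝ c :=
    (ContinuousLinearMap.toSpanSingletonCLE (𝕜 := ℝ) (E := ℝ)).continuous
  refine (hasStrictFDerivAt_uncurry_coprod
    (f₁ := fun t x ↦ ContinuousLinearMap.toSpanSingleton ℝ (Kt t x))
    (f₂ := fun t x ↦ ContinuousLinearMap.toSpanSingleton ℝ (Kx t x)) ?_ ?_
    (hspan.continuousAt.comp (hK.bddContOn_time.continuousOn.continuousAt hnhds))
    (hspan.continuousAt.comp (hK.bddContOn_space.continuousOn.continuousAt hnhds))).hasFDerivAt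
  · filter_upwards [hnhds] with v hv using (hK.hasDerivAt_time v.1 hv.1 v.2).hasFDerivAt
  · filter_upwards [hnhds] with v hv using (hK.hasDerivAt_space v.1 hv.1 v.2).hasFDerivAt

lemma hasDerivAt_sqrt_mul (hK : HasHeatDerivsOn K Kt Kx Kxx I) (hI : IsOpen I) {t : ℝ}
    (ht : t ∈ I) (ht0 : 0 < t) (z : ℝ) :
    HasDerivAt (fun s ↦ K s (√s * z))
      (Kt t (√t * z) + z * Kx t (√t * z) / (2 * √t)) t := by
  have hpath : HasDerivAt (fun s ↦ (s, √s * z)) (1, 1 / (2 * √t) * z) t :=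
    (hasDerivAt_id t).prodMk ((Real.hasDerivAt_sqrt ht0.ne').mul_const z)
  refine ((hK.hasFDerivAt hI ht (√t * z)).comp_hasDerivAt t hpath).congr_deriv ?_
  simp only [ContinuousLinearMap.coprod_apply, ContinuousLinearMap.toSpanSingleton_apply,
    smul_eq_mul]
  ring

/-- Stein's identity turns the drift of `√t * z` into half the second space derivative. -/
lemma integral_deriv_sqrt_mul (hK : HasHeatDerivsOn K Kt Kx Kxx I) {t : ℝ} (ht : t ∈ I)
    (ht0 : 0 < t) :
    ∫ z, (Kt t (√t * z) + z * Kx t (√t * z) / (2 * √t)) ∂γ =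
      ∫ z, (Kt t (√t * z) + Kxx t (√t * z) / 2) ∂γ := by
  have hKt := hK.bddContOn_time.slice ht √t
  have hKx := hK.bddContOn_space.slice ht √t
  have hKxx := hK.bddContOn_space₂.slice ht √t
  obtain ⟨C, hC⟩ := hKx.exists_bound
  obtain ⟨C', hC'⟩ := ((bddContOn_const √t univ).mul hKxx).exists_bound
  have hd : ∀ z, HasDerivAt (fun z ↦ Kx t (√t * z)) (√t * Kxx t (√t * z)) z := fun z ↦
    ((hK.hasDerivAt_space₂ t ht (√t * z)).comp z ((hasDerivAt_id z).const_mul √t)).congr_deriv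
      (by ring)
  have hstein : ∫ z, z * Kx t (√t * z) ∂γ = ∫ z, √t * Kxx t (√t * z) ∂γ :=
    integral_mul_gaussianReal_eq_integral_deriv hd (hKxx.continuous.const_mul _)
      (fun z ↦ hC z trivial) fun z ↦ hC' z trivial
  have hint : Integrable (fun z ↦ z * Kx t (√t * z)) γ :=
    (memLp_one_iff_integrable.1 (memLp_id_gaussianReal 1)).mul_bdd
      hKx.continuous.aestronglyMeasurable (ae_of_all _ fun z ↦ hC z trivial)
  rw [integral_add hKt.integrable (hint.div_const _),
    integral_add hKt.integrable (hKxx.integrable.div_const _), integral_div, integral_div, hstein,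
    integral_const_mul]
  have := Real.sqrt_pos.2 ht0
  field_simp

lemma hasDerivAt_integral (hK : HasHeatDerivsOn K Kt Kx Kxx I) (hI : IsOpen I) {t : ℝ}
    (ht : t ∈ I) (ht0 : 0 < t) :
    HasDerivAt (fun s ↦ ∫ z, K s (√s * z) ∂γ)
      (∫ z, (Kt t (√t * z) + Kxx t (√t * z) / 2) ∂γ) t := by
  obtain ⟨A, hA⟩ := hK.bddContOn_time.exists_bound
  obtain ⟨B, hB⟩ := hK.bddContOn_space.exists_bound
  have hnhds : I ∩ Ioi (t / 2) ∈ 𝓝 t :=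
    inter_mem (hI.mem_nhds ht) (Ioi_mem_nhds (by linarith))
  rw [← hK.integral_deriv_sqrt_mul ht ht0]
  refine (hasDerivAt_integral_of_dominated_loc_of_deriv_le
    (bound := fun z ↦ A + |z| * B / (2 * √(t / 2))) hnhds ?_
    (hK.bddContOn.slice ht √t).integrable ?_ (ae_of_all _ fun z s hs ↦ ?_) ?_
    (ae_of_all _ fun z s hs ↦ hK.hasDerivAt_sqrt_mul hI hs.1 ((half_pos ht0).trans hs.2) z)).2
  · filter_upwards [hI.mem_nhds ht] with s hs using
      (hK.bddContOn.slice hs √s).continuous.aestronglyMeasurable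
  · exact ((hK.bddContOn_time.slice ht √t).continuous.add ((continuous_id.mul
      (hK.bddContOn_space.slice ht √t).continuous).div_const _)).aestronglyMeasurable
  · have hts : √(t / 2) ≤ √s := Real.sqrt_le_sqrt hs.2.le
    have : 0 < √(t / 2) := Real.sqrt_pos.2 (half_pos ht0)
    have hBs : ‖Kx s (√s * z)‖ ≤ B := hB (s, √s * z) ⟨hs.1, trivial⟩
    have hB0 : 0 ≤ B := (norm_nonneg _).trans hBs
    refine (norm_add_le _ _).trans (add_le_add (hA (s, √s * z) ⟨hs.1, trivial⟩) ?_)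
    rw [norm_div, norm_mul, Real.norm_eq_abs z, Real.norm_of_nonneg (by positivity : 0 ≤ 2 * √s)]
    gcongr
  · exact (integrable_const A).add
      (((memLp_one_iff_integrable.1 (memLp_id_gaussianReal 1)).abs.mul_const B).div_const _)

/-- A subsolution of the backward heat equation is a submartingale along Brownian motion. -/
lemma apply_zero_zero_le_integral (hK : HasHeatDerivsOn K Kt Kx Kxx (Ioo 0 1))
    (hK01 : BddContOn ↿K (Icc 0 1 ×ˢ univ))
    (hsub : ∀ t ∈ Ioo (0 : ℝ) 1, ∀ x, 0 ≤ Kt t x + Kxx t x / 2) :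
    K 0 0 ≤ ∫ z, K 1 z ∂γ := by
  have hcont : BddContOn (fun t ↦ ∫ z, K t (√t * z) ∂γ) (Icc 0 1) :=
    BddContOn.integral_right (f := fun p ↦ K p.1 (√p.1 * p.2))
      (hK01.comp_continuous (by fun_prop : Continuous fun p : ℝ × ℝ ↦ (p.1, √p.1 * p.2))
        fun _ hp ↦ ⟨hp.1, trivial⟩)
  have hmono : MonotoneOn (fun t ↦ ∫ z, K t (√t * z) ∂γ) (Icc 0 1) := by
    refine monotoneOn_of_hasDerivWithinAt_nonneg (convex_Icc 0 1) hcont.continuousOn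
      (f' := fun t ↦ ∫ z, (Kt t (√t * z) + Kxx t (√t * z) / 2) ∂γ) ?_ ?_ <;> rw [interior_Icc]
    · exact fun t ht ↦ (hK.hasDerivAt_integral isOpen_Ioo ht ht.1).hasDerivWithinAt
    · exact fun t ht ↦ integral_nonneg fun z ↦ hsub t ht _
  simpa using hmono (left_mem_Icc.2 zero_le_one) (right_mem_Icc.2 zero_le_one) zero_le_one

lemma add {L Lt Lx Lxx : ℝ → ℝ → ℝ} (hK : HasHeatDerivsOn K Kt Kx Kxx I)
    (hL : HasHeatDerivsOn L Lt Lx Lxx I) :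
    HasHeatDerivsOn (fun t x ↦ K t x + L t x) (fun t x ↦ Kt t x + Lt t x)
      (fun t x ↦ Kx t x + Lx t x) (fun t x ↦ Kxx t x + Lxx t x) I where
  hasDerivAt_time t ht x := (hK.hasDerivAt_time t ht x).add (hL.hasDerivAt_time t ht x)
  hasDerivAt_space t ht x := (hK.hasDerivAt_space t ht x).add (hL.hasDerivAt_space t ht x)
  hasDerivAt_space₂ t ht x := (hK.hasDerivAt_space₂ t ht x).add (hL.hasDerivAt_space₂ t ht x)
  bddContOn := hK.bddContOn.add hL.bddContOn
  bddContOn_time := hK.bddContOn_time.add hL.bddContOn_time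
  bddContOn_space := hK.bddContOn_space.add hL.bddContOn_space
  bddContOn_space₂ := hK.bddContOn_space₂.add hL.bddContOn_space₂

lemma time_mul (hK : HasHeatDerivsOn K Kt Kx Kxx I) (hI : Bornology.IsBounded I) :
    HasHeatDerivsOn (fun t x ↦ t * K t x) (fun t x ↦ K t x + t * Kt t x)
      (fun t x ↦ t * Kx t x) (fun t x ↦ t * Kxx t x) I where
  hasDerivAt_time t ht x :=
    ((hasDerivAt_id t).mul (hK.hasDerivAt_time t ht x)).congr_deriv (by simp)
  hasDerivAt_space t ht x := (hK.hasDerivAt_space t ht x).const_mul t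
  hasDerivAt_space₂ t ht x := (hK.hasDerivAt_space₂ t ht x).const_mul t
  bddContOn := (bddContOn_fst hI).mul hK.bddContOn
  bddContOn_time := hK.bddContOn.add ((bddContOn_fst hI).mul hK.bddContOn_time)
  bddContOn_space := (bddContOn_fst hI).mul hK.bddContOn_space
  bddContOn_space₂ := (bddContOn_fst hI).mul hK.bddContOn_space₂

lemma comp (hK : HasHeatDerivsOn K Kt Kx Kxx I) {S : Set ℝ} (hS : IsClosed S)
    (hKS : ∀ t ∈ I, ∀ x, K t x ∈ S) {Ψ Ψ' Ψ'' : ℝ → ℝ} (hΨ : ∀ p ∈ S, HasDerivAt Ψ (Ψ' p) p)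
    (hΨ' : ∀ p ∈ S, HasDerivAt Ψ' (Ψ'' p) p) (hΨ'' : ContinuousOn Ψ'' S) :
    HasHeatDerivsOn (fun t x ↦ Ψ (K t x)) (fun t x ↦ Ψ' (K t x) * Kt t x)
      (fun t x ↦ Ψ' (K t x) * Kx t x)
      (fun t x ↦ Ψ'' (K t x) * Kx t x ^ 2 + Ψ' (K t x) * Kxx t x) I := by
  have hcomp : ∀ {G : ℝ → ℝ}, ContinuousOn G S → BddContOn (fun p ↦ G (↿K p)) (I ×ˢ univ) :=
    fun hG ↦ hK.bddContOn.continuousOn_comp hG hS fun p hp ↦ hKS p.1 hp.1 p.2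
  have hΨK := hcomp fun p hp ↦ (hΨ p hp).continuousAt.continuousWithinAt
  have hΨK' := hcomp fun p hp ↦ (hΨ' p hp).continuousAt.continuousWithinAt
  exact
    { hasDerivAt_time := fun t ht x ↦ (hΨ _ (hKS t ht x)).comp t (hK.hasDerivAt_time t ht x)
      hasDerivAt_space := fun t ht x ↦ (hΨ _ (hKS t ht x)).comp x (hK.hasDerivAt_space t ht x)
      hasDerivAt_space₂ := fun t ht x ↦
        (((hΨ' _ (hKS t ht x)).comp x (hK.hasDerivAt_space t ht x)).mul
          (hK.hasDerivAt_space₂ t ht x)).congr_deriv (by simp only [Function.comp_apply]; ring)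
      bddContOn := hΨK
      bddContOn_time := hΨK'.mul hK.bddContOn_time
      bddContOn_space := hΨK'.mul hK.bddContOn_space
      bddContOn_space₂ := ((hcomp hΨ'').mul (hK.bddContOn_space.pow 2)).add
        (hΨK'.mul hK.bddContOn_space₂) }

lemma mono (hK : HasHeatDerivsOn K Kt Kx Kxx I) {J : Set ℝ} (hJ : J ⊆ I) :
    HasHeatDerivsOn K Kt Kx Kxx J where
  hasDerivAt_time t ht := hK.hasDerivAt_time t (hJ ht)
  hasDerivAt_space t ht := hK.hasDerivAt_space t (hJ ht)
  hasDerivAt_space₂ t ht := hK.hasDerivAt_space₂ t (hJ ht)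
  bddContOn := hK.bddContOn.mono (prod_mono_left hJ)
  bddContOn_time := hK.bddContOn_time.mono (prod_mono_left hJ)
  bddContOn_space := hK.bddContOn_space.mono (prod_mono_left hJ)
  bddContOn_space₂ := hK.bddContOn_space₂.mono (prod_mono_left hJ)

end HasHeatDerivsOn

end HeatOperator

section BackwardHeat

/-- Every `f j` is bounded with derivative `f (j + 1)`, so that `f j` is the `j`-th derivative of
the smooth function `f 0`. -/
structure HasBoundedDerivs (f : ℕ → ℝ → ℝ) : Prop where
  hasDerivAt : ∀ j x, HasDerivAt (f j) (f (j + 1) x) x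
  exists_bound : ∀ j, ∃ C, ∀ x, ‖f j x‖ ≤ C

/-- The solution of the backward heat equation `∂ₜu + ½ ∂ₓₓu = 0` with terminal value `f` at
time `1`. -/
noncomputable def backwardHeat (f : ℝ → ℝ) (t x : ℝ) : ℝ := ∫ w, f (x + √(1 - t) * w) ∂γ

lemma backwardHeat_zero_zero (f : ℝ → ℝ) : backwardHeat f 0 0 = ∫ w, f w ∂γ := by
  simp [backwardHeat]

lemma backwardHeat_one (f : ℝ → ℝ) (x : ℝ) : backwardHeat f 1 x = f x := by
  simp [backwardHeat]

lemma BddContOn.backwardHeat {f : ℝ → ℝ} (hf : BddContOn f univ) :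
    BddContOn ↿(backwardHeat f) univ :=
  BddContOn.integral_right (f := fun p : (ℝ × ℝ) × ℝ ↦ f (p.1.2 + √(1 - p.1.1) * p.2))
    (hf.comp_continuous (by fun_prop) fun _ _ ↦ trivial)

lemma backwardHeat_mem_Icc {f : ℝ → ℝ} {a b : ℝ} (hc : Continuous f) (hab : ∀ x, f x ∈ Icc a b)
    (t x : ℝ) : backwardHeat f t x ∈ Icc a b := by
  have hcont : Continuous fun w ↦ f (x + √(1 - t) * w) := by fun_prop
  have hint : Integrable (fun w ↦ f (x + √(1 - t) * w)) γ :=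
    Integrable.of_mem_Icc a b hcont.aemeasurable (ae_of_all _ fun w ↦ hab _)
  constructor
  · simpa [backwardHeat] using integral_mono (integrable_const a) hint fun w ↦ (hab _).1
  · simpa [backwardHeat] using integral_mono hint (integrable_const b) fun w ↦ (hab _).2

namespace HasBoundedDerivs

variable {f : ℕ → ℝ → ℝ}

lemma bddContOn (hf : HasBoundedDerivs f) (j : ℕ) : BddContOn (f j) univ :=
  ⟨fun x _ ↦ (hf.hasDerivAt j x).continuousAt.continuousWithinAt,
    (hf.exists_bound j).imp fun _ hC x _ ↦ hC x⟩

lemma hasHeatDerivsOn_const_add (hf : HasBoundedDerivs f) (j : ℕ) (x : ℝ) :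
    HasHeatDerivsOn (fun _ y ↦ f j (x + y)) (fun _ _ ↦ 0) (fun _ y ↦ f (j + 1) (x + y))
      (fun _ y ↦ f (j + 2) (x + y)) univ := by
  have hcomp : ∀ i, BddContOn (fun p : ℝ × ℝ ↦ f i (x + p.2)) (univ ×ˢ univ) := fun i ↦
    (hf.bddContOn i).comp_continuous (by fun_prop) fun _ _ ↦ trivial
  exact
    { hasDerivAt_time := fun t _ y ↦ hasDerivAt_const t _
      hasDerivAt_space := fun _ _ y ↦ (hf.hasDerivAt j (x + y)).comp_const_add x y
      hasDerivAt_space₂ := fun _ _ y ↦ (hf.hasDerivAt (j + 1) (x + y)).comp_const_add x y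
      bddContOn := hcomp j
      bddContOn_time := bddContOn_const 0 _
      bddContOn_space := hcomp (j + 1)
      bddContOn_space₂ := hcomp (j + 2) }

lemma hasDerivAt_backwardHeat_time (hf : HasBoundedDerivs f) (j : ℕ) {t : ℝ} (ht : t < 1)
    (x : ℝ) :
    HasDerivAt (fun s ↦ backwardHeat (f j) s x) (-backwardHeat (f (j + 2)) t x / 2) t := by
  have h := (hf.hasHeatDerivsOn_const_add j x).hasDerivAt_integral isOpen_univ
    (mem_univ (1 - t)) (sub_pos.2 ht)
  refine (h.comp t ((hasDerivAt_id t).const_sub 1)).congr_deriv ?_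
  simp only [zero_add, integral_div, backwardHeat]
  ring

lemma hasDerivAt_backwardHeat_space (hf : HasBoundedDerivs f) (j : ℕ) (t x : ℝ) :
    HasDerivAt (backwardHeat (f j) t) (backwardHeat (f (j + 1)) t x) x := by
  obtain ⟨C, hC⟩ := hf.exists_bound (j + 1)
  have hcomp : ∀ i x, BddContOn (fun w ↦ f i (x + √(1 - t) * w)) univ := fun i x ↦
    (hf.bddContOn i).comp_continuous (by fun_prop) fun _ _ ↦ trivial
  exact (hasDerivAt_integral_of_dominated_loc_of_deriv_le (bound := fun _ ↦ C)
    (F' := fun y w ↦ f (j + 1) (y + √(1 - t) * w)) univ_mem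
    (Eventually.of_forall fun y ↦ (hcomp j y).continuous.aestronglyMeasurable)
    (hcomp j x).integrable (hcomp (j + 1) x).continuous.aestronglyMeasurable
    (ae_of_all _ fun w y _ ↦ hC _) (integrable_const _)
    (ae_of_all _ fun w y _ ↦ (hf.hasDerivAt j _).comp_add_const y _)).2

lemma hasHeatDerivsOn_backwardHeat (hf : HasBoundedDerivs f) (j : ℕ) :
    HasHeatDerivsOn (backwardHeat (f j)) (fun t x ↦ -backwardHeat (f (j + 2)) t x / 2)
      (backwardHeat (f (j + 1))) (backwardHeat (f (j + 2))) (Iio 1) where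
  hasDerivAt_time _ ht x := hf.hasDerivAt_backwardHeat_time j ht x
  hasDerivAt_space t _ x := hf.hasDerivAt_backwardHeat_space j t x
  hasDerivAt_space₂ t _ x := hf.hasDerivAt_backwardHeat_space (j + 1) t x
  bddContOn := (hf.bddContOn j).backwardHeat.mono (subset_univ _)
  bddContOn_time := (hf.bddContOn (j + 2)).backwardHeat.continuousOn_comp
    (g := fun y ↦ -y / 2) (by fun_prop) isClosed_univ (mapsTo_univ _ _) |>.mono (subset_univ _)
  bddContOn_space := (hf.bddContOn (j + 1)).backwardHeat.mono (subset_univ _)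
  bddContOn_space₂ := (hf.bddContOn (j + 2)).backwardHeat.mono (subset_univ _)

end HasBoundedDerivs

end BackwardHeat

section Bobkov

lemma HasHeatDerivsOn.sqrt_apply_zero_zero_le_integral_sqrt {N Nt Nx Nxx : ℝ → ℝ → ℝ} {c : ℝ}
    (hN : HasHeatDerivsOn N Nt Nx Nxx (Ioo 0 1)) (hN01 : BddContOn ↿N (Icc 0 1 ×ˢ univ))
    (hc : 0 < c) (hcN : ∀ t ∈ Ioo (0 : ℝ) 1, ∀ x, c ≤ N t x)
    (hsub : ∀ t ∈ Ioo (0 : ℝ) 1, ∀ x, Nx t x ^ 2 ≤ 4 * N t x * (Nt t x + Nxx t x / 2)) :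
    √(N 0 0) ≤ ∫ z, √(N 1 z) ∂γ := by
  have hpos : ∀ p ∈ Ici c, 0 < p := fun p hp ↦ hc.trans_le hp
  have hsqrt : HasHeatDerivsOn (fun t x ↦ √(N t x)) _ _ _ (Ioo 0 1) :=
    hN.comp (S := Ici c) (Ψ' := fun p ↦ 1 / (2 * √p)) (Ψ'' := fun p ↦ -(1 / (4 * p * √p)))
      isClosed_Ici hcN (fun p hp ↦ Real.hasDerivAt_sqrt (hpos p hp).ne') (fun p hp ↦ ?_) ?_
  · refine hsqrt.apply_zero_zero_le_integral hN01.sqrt fun t ht x ↦ ?_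
    have hn := hpos _ (hcN t ht x)
    have := Real.sqrt_pos.2 hn
    calc (0 : ℝ) ≤ (4 * N t x * (Nt t x + Nxx t x / 2) - Nx t x ^ 2) / (8 * N t x * √(N t x)) :=
          div_nonneg (sub_nonneg.2 (hsub t ht x)) (by positivity)
      _ = _ := by
          field_simp
          ring
  · have hp0 := hpos p hp
    have := Real.sqrt_pos.2 hp0
    have h := ((Real.hasDerivAt_sqrt hp0.ne').const_mul 2).fun_inv (by positivity)
    simp only [one_div]
    refine h.congr_deriv ?_
    field_simp
    rw [Real.sq_sqrt hp0.le]
    ring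
  · have hne : ∀ p ∈ Ici c, 4 * p * √p ≠ 0 := fun p hp ↦
      (mul_pos (mul_pos four_pos (hpos p hp)) (Real.sqrt_pos.2 (hpos p hp))).ne'
    exact (continuousOn_const.div (by fun_prop) hne).neg

lemma hasDerivAt_isoProfile_sq {p : ℝ} (hp : p ∈ Ioo 0 1) :
    HasDerivAt (fun p ↦ isoProfile p ^ 2) (-2 * (isoProfile p * PhiInv p)) p :=
  ((hasDerivAt_isoProfile hp).fun_pow 2).congr_deriv (by ring)

lemma hasDerivAt_isoProfile_mul_PhiInv {p : ℝ} (hp : p ∈ Ioo 0 1) :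
    HasDerivAt (fun p ↦ isoProfile p * PhiInv p) (1 - PhiInv p ^ 2) p := by
  refine ((hasDerivAt_isoProfile hp).mul (hasDerivAt_PhiInv hp)).congr_deriv ?_
  rw [isoProfile, mul_inv_cancel₀ (gaussianPDFReal_std_pos _).ne']
  ring

lemma continuousOn_isoProfile : ContinuousOn isoProfile (Ioo 0 1) := fun _ hp ↦
  (hasDerivAt_isoProfile hp).continuousAt.continuousWithinAt

lemma continuousOn_PhiInv : ContinuousOn PhiInv (Ioo 0 1) := fun _ hp ↦
  (hasDerivAt_PhiInv hp).continuousAt.continuousWithinAt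

lemma Icc_one_sub_subset_Ioo {ε : ℝ} (hε : 0 < ε) : Icc ε (1 - ε) ⊆ Ioo 0 1 :=
  Icc_subset_Ioo hε (sub_lt_self 1 hε)

lemma BddContOn.isoProfile {X : Type*} [TopologicalSpace X] {s : Set X} {f : X → ℝ} {ε : ℝ}
    (hf : BddContOn f s) (hε : 0 < ε) (hfε : ∀ x ∈ s, f x ∈ Icc ε (1 - ε)) :
    BddContOn (fun x ↦ isoProfile (f x)) s :=
  hf.continuousOn_comp (continuousOn_isoProfile.mono (Icc_one_sub_subset_Ioo hε)) isClosed_Icc hfε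

lemma exists_pos_le_isoProfile_sq {ε : ℝ} (hε : 0 < ε) :
    ∃ c > 0, ∀ p ∈ Icc ε (1 - ε), c ≤ isoProfile p ^ 2 :=
  isCompact_Icc.exists_forall_le'
    ((continuousOn_isoProfile.mono (Icc_one_sub_subset_Ioo hε)).pow 2)
    fun p _ ↦ pow_pos (isoProfile_pos p) 2

theorem isoProfile_integral_gaussianReal_le {f : ℕ → ℝ → ℝ} {ε : ℝ} (hf : HasBoundedDerivs f)
    (hε : 0 < ε) (hfε : ∀ x, f 0 x ∈ Icc ε (1 - ε)) :
    isoProfile (∫ x, f 0 x ∂γ) ≤ ∫ x, √(isoProfile (f 0 x) ^ 2 + f 1 x ^ 2) ∂γ := by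
  set u := backwardHeat (f 0)
  set v := backwardHeat (f 1)
  set w := backwardHeat (f 2)
  have huε : ∀ t x, u t x ∈ Icc ε (1 - ε) := backwardHeat_mem_Icc (hf.bddContOn 0).continuous hfε
  have hIoo := Icc_one_sub_subset_Ioo hε
  have hprofile : HasHeatDerivsOn (fun t x ↦ isoProfile (u t x) ^ 2) _ _ _ (Ioo 0 1) :=
    ((hf.hasHeatDerivsOn_backwardHeat 0).mono Ioo_subset_Iio_self).comp isClosed_Icc
      (fun t _ x ↦ huε t x) (fun p hp ↦ hasDerivAt_isoProfile_sq (hIoo hp))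
      (fun p hp ↦ (hasDerivAt_isoProfile_mul_PhiInv (hIoo hp)).const_mul (-2))
      (continuousOn_const.mul (continuousOn_const.sub ((continuousOn_PhiInv.mono hIoo).pow 2)))
  have hgrad : HasHeatDerivsOn (fun t x ↦ t * v t x ^ 2) _ _ _ (Ioo 0 1) :=
    (((hf.hasHeatDerivsOn_backwardHeat 1).mono Ioo_subset_Iio_self).comp (Ψ' := fun q ↦ 2 * q)
      (Ψ'' := fun _ ↦ 2) isClosed_univ (fun _ _ _ ↦ trivial)
      (fun q _ ↦ (hasDerivAt_pow 2 q).congr_deriv (by simp))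
      (fun q _ ↦ by simpa using (hasDerivAt_id q).const_mul 2)
      continuousOn_const).time_mul (Metric.isBounded_Ioo 0 1)
  obtain ⟨c, hc, hcI⟩ := exists_pos_le_isoProfile_sq hε
  have hN01 : BddContOn (fun p : ℝ × ℝ ↦ isoProfile (u p.1 p.2) ^ 2 + p.1 * v p.1 p.2 ^ 2)
      (Icc 0 1 ×ˢ univ) :=
    ((((hf.bddContOn 0).backwardHeat.mono (subset_univ _)).isoProfile hε
      fun p _ ↦ huε p.1 p.2).pow 2).add ((bddContOn_fst (Metric.isBounded_Icc 0 1)).mul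
        (((hf.bddContOn 1).backwardHeat.mono (subset_univ _)).pow 2))
  have key := (hprofile.add hgrad).sqrt_apply_zero_zero_le_integral_sqrt hN01 hc
    (fun t ht x ↦ (hcI _ (huε t x)).trans
      (le_add_of_nonneg_right (mul_nonneg ht.1.le (sq_nonneg _)))) fun t ht x ↦ ?_
  · simpa [u, v, backwardHeat_zero_zero, backwardHeat_one, Real.sqrt_sq (isoProfile_pos _).le]
      using key
  · have hsq : 0 ≤ 4 * t * (isoProfile (u t x) * w t x + PhiInv (u t x) * v t x ^ 2) ^ 2 :=
      mul_nonneg (mul_nonneg zero_le_four ht.1.le) (sq_nonneg _)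
    rw [← sub_nonneg]
    refine hsq.trans_eq ?_
    simp only [w, Nat.reduceAdd, zero_add]
    ring

end Bobkov

section Tensorization

instance isProbabilityMeasure_stdGaussian (d : ℕ) :
    IsProbabilityMeasure (_root_.stdGaussian d) := by
  rw [_root_.stdGaussian]
  infer_instance

lemma sqrt_sum_sq_integral_le {α ι : Type*} [MeasurableSpace α] [Fintype ι] {μ : Measure α}
    {b : ι → α → ℝ} (hb : ∀ i, Integrable (b i) μ)
    (hn : Integrable (fun x ↦ √(∑ i, b i x ^ 2)) μ) :
    √(∑ i, (∫ x, b i x ∂μ) ^ 2) ≤ ∫ x, √(∑ i, b i x ^ 2) ∂μ := by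
  set m : ι → ℝ := fun i ↦ ∫ x, b i x ∂μ
  set N := √(∑ i, m i ^ 2)
  have hN : N * N ≤ N * ∫ x, √(∑ i, b i x ^ 2) ∂μ := by
    calc N * N = ∑ i, m i ^ 2 := Real.mul_self_sqrt (Finset.sum_nonneg fun i _ ↦ sq_nonneg _)
      _ = ∫ x, ∑ i, m i * b i x ∂μ := by
          rw [integral_finsetSum _ fun i _ ↦ (hb i).const_mul _]
          simp only [integral_const_mul, sq, m]
      _ ≤ ∫ x, N * √(∑ i, b i x ^ 2) ∂μ :=
          integral_mono (integrable_finsetSum _ fun i _ ↦ (hb i).const_mul _) (hn.const_mul _)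
            fun x ↦ Real.sum_mul_le_sqrt_mul_sqrt _ _ _
      _ = N * ∫ x, √(∑ i, b i x ^ 2) ∂μ := integral_const_mul _ _
  rcases (Real.sqrt_nonneg _ : 0 ≤ N).eq_or_lt with h0 | h0
  · exact h0.symm.le.trans (integral_nonneg fun x ↦ Real.sqrt_nonneg _)
  · exact le_of_mul_le_mul_left hN h0

namespace BddContOn

variable {d : ℕ} {F : (Fin (d + 1) → ℝ) → ℝ}

lemma comp_cons (hF : BddContOn F univ) (x : Fin d → ℝ) :
    BddContOn (fun y ↦ F (Fin.cons y x)) univ :=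
  hF.comp_continuous (by fun_prop : Continuous fun y : ℝ ↦ (Fin.cons y x : Fin (d + 1) → ℝ))
    fun _ _ ↦ trivial

lemma integral_cons (hF : BddContOn F univ) : BddContOn (fun x ↦ ∫ y, F (Fin.cons y x) ∂γ) univ :=
  integral_right (f := fun p : (Fin d → ℝ) × ℝ ↦ F (Fin.cons p.2 p.1)) <|
    hF.comp_continuous
      (by fun_prop : Continuous fun p : (Fin d → ℝ) × ℝ ↦ (Fin.cons p.2 p.1 : Fin (d + 1) → ℝ))
      fun _ _ ↦ trivial

end BddContOn

lemma integral_stdGaussian_succ {d : ℕ} {F : (Fin (d + 1) → ℝ) → ℝ} (hF : BddContOn F univ) :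
    ∫ x, F x ∂_root_.stdGaussian (d + 1) =
      ∫ x, ∫ y, F (Fin.cons y x) ∂γ ∂_root_.stdGaussian d := by
  have hmp := (measurePreserving_piFinSuccAbove (fun _ : Fin (d + 1) ↦ γ) 0).symm
  have hsymm : ∀ p : ℝ × (Fin d → ℝ),
      (MeasurableEquiv.piFinSuccAbove (fun _ : Fin (d + 1) ↦ ℝ) 0).symm p =
        Fin.cons p.1 p.2 := fun p ↦ by
    simp [MeasurableEquiv.piFinSuccAbove, Fin.insertNthEquiv]
  rw [_root_.stdGaussian, ← hmp.integral_comp', integral_prod_symm]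
  · simp only [hsymm]
    rfl
  · simp only [hsymm]
    exact (hF.comp_continuous (by fun_prop :
      Continuous fun p : ℝ × (Fin d → ℝ) ↦ (Fin.cons p.1 p.2 : Fin (d + 1) → ℝ))
      fun _ _ ↦ trivial).integrable

/-- `D j i` is the `j`-th derivative of `f` in the direction of the `i`-th coordinate axis, and all
of these functions are continuous and bounded. No mixed partial derivatives are recorded. -/
structure HasBoundedPartials {ι : Type*} [DecidableEq ι] (f : (ι → ℝ) → ℝ)
    (D : ℕ → ι → (ι → ℝ) → ℝ) : Prop where
  bddContOn : BddContOn f univ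
  zero : ∀ i, D 0 i = f
  hasDerivAt : ∀ j i x, HasDerivAt (fun s ↦ D j i (Function.update x i s)) (D (j + 1) i x) (x i)
  bddContOn_partial : ∀ j i, BddContOn (D j i) univ

namespace HasBoundedPartials

variable {d : ℕ} {f : (Fin (d + 1) → ℝ) → ℝ} {D : ℕ → Fin (d + 1) → (Fin (d + 1) → ℝ) → ℝ}

lemma hasBoundedDerivs_cons (hf : HasBoundedPartials f D) (x : Fin d → ℝ) :
    HasBoundedDerivs fun j y ↦ D j 0 (Fin.cons y x) where
  hasDerivAt j y := by simpa using hf.hasDerivAt j 0 (Fin.cons y x)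
  exists_bound j := ((hf.bddContOn_partial j 0).comp_cons x).exists_bound.imp
    fun _ hC y ↦ hC y trivial

lemma integral_cons (hf : HasBoundedPartials f D) :
    HasBoundedPartials (fun x ↦ ∫ y, f (Fin.cons y x) ∂γ)
      fun j (i : Fin d) x ↦ ∫ y, D j i.succ (Fin.cons y x) ∂γ where
  bddContOn := hf.bddContOn.integral_cons
  zero i := by simp only [hf.zero]
  bddContOn_partial j i := (hf.bddContOn_partial j i.succ).integral_cons
  hasDerivAt j i x := by
    obtain ⟨C, hC⟩ := (hf.bddContOn_partial (j + 1) i.succ).exists_bound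
    have hD := fun k x ↦ (hf.bddContOn_partial k i.succ).comp_cons x
    have hderiv : ∀ y s, HasDerivAt (fun s ↦ D j i.succ (Fin.cons y (Function.update x i s)))
        (D (j + 1) i.succ (Fin.cons y (Function.update x i s))) s := fun y s ↦ by
      simpa [← Fin.cons_update] using
        hf.hasDerivAt j i.succ (Fin.cons y (Function.update x i s))
    have h := (hasDerivAt_integral_of_dominated_loc_of_deriv_le (μ := γ) (x₀ := x i)
      (bound := fun _ ↦ C) univ_mem
      (Eventually.of_forall fun s ↦ (hD j _).continuous.aestronglyMeasurable)
      (hD j _).integrable (hD (j + 1) _).continuous.aestronglyMeasurable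
      (ae_of_all _ fun y s _ ↦ hC _ trivial) (integrable_const _)
      (ae_of_all _ fun y s _ ↦ hderiv y s)).2
    simpa only [Function.update_eq_self] using h

variable {ε : ℝ}

lemma bddContOn_sqrt {ι : Type*} [DecidableEq ι] [Fintype ι] {f : (ι → ℝ) → ℝ}
    {D : ℕ → ι → (ι → ℝ) → ℝ} (hf : HasBoundedPartials f D) (hε : 0 < ε)
    (hfε : ∀ x, f x ∈ Icc ε (1 - ε)) :
    BddContOn (fun x ↦ √(isoProfile (f x) ^ 2 + ∑ i, D 1 i x ^ 2)) univ :=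
  (((hf.bddContOn.isoProfile hε fun x _ ↦ hfε x).pow 2).add
    (BddContOn.sum fun i ↦ (hf.bddContOn_partial 1 i).pow 2)).sqrt

lemma sqrt_isoProfile_integral_cons_le (hf : HasBoundedPartials f D) (hε : 0 < ε)
    (hfε : ∀ x, f x ∈ Icc ε (1 - ε)) (x : Fin d → ℝ) :
    √(isoProfile (∫ y, f (Fin.cons y x) ∂γ) ^ 2 +
        ∑ i : Fin d, (∫ y, D 1 i.succ (Fin.cons y x) ∂γ) ^ 2) ≤
      ∫ y, √(isoProfile (f (Fin.cons y x)) ^ 2 + ∑ i, D 1 i (Fin.cons y x) ^ 2) ∂γ := by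
  let b : Fin (d + 1) → ℝ → ℝ :=
    Fin.cons (fun y ↦ √(isoProfile (f (Fin.cons y x)) ^ 2 + D 1 0 (Fin.cons y x) ^ 2))
      fun i y ↦ D 1 i.succ (Fin.cons y x)
  have hb_sum : ∀ y, √(∑ i, b i y ^ 2) =
      √(isoProfile (f (Fin.cons y x)) ^ 2 + ∑ i, D 1 i (Fin.cons y x) ^ 2) := fun y ↦ by
    simp only [b, Fin.sum_univ_succ, Fin.cons_zero, Fin.cons_succ]
    rw [Real.sq_sqrt (by positivity), add_assoc]
  have hb_int : ∀ i, Integrable (b i) γ := Fin.cases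
    ((((hf.bddContOn.comp_cons x).isoProfile hε fun y _ ↦ hfε _).pow 2).add
      (((hf.bddContOn_partial 1 0).comp_cons x).pow 2)).sqrt.integrable
    fun i ↦ ((hf.bddContOn_partial 1 i.succ).comp_cons x).integrable
  have hline : isoProfile (∫ y, f (Fin.cons y x) ∂γ) ≤ ∫ y, b 0 y ∂γ := by
    simpa only [hf.zero, b, Fin.cons_zero] using
      isoProfile_integral_gaussianReal_le (hf.hasBoundedDerivs_cons x) hε
        fun y ↦ by simpa only [hf.zero] using hfε _
  calc √(isoProfile (∫ y, f (Fin.cons y x) ∂γ) ^ 2 +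
        ∑ i : Fin d, (∫ y, D 1 i.succ (Fin.cons y x) ∂γ) ^ 2)
      ≤ √(∑ i, (∫ y, b i y ∂γ) ^ 2) := by
        rw [Fin.sum_univ_succ]
        have := (isoProfile_pos (∫ y, f (Fin.cons y x) ∂γ)).le
        exact Real.sqrt_le_sqrt (add_le_add_left (by gcongr) _)
    _ ≤ ∫ y, √(∑ i, b i y ^ 2) ∂γ := sqrt_sum_sq_integral_le hb_int <| by
        simpa only [hb_sum] using ((hf.bddContOn_sqrt hε hfε).comp_cons x).integrable
    _ = _ := by simp only [hb_sum]

end HasBoundedPartials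

theorem isoProfile_integral_stdGaussian_le {ε : ℝ} (hε : 0 < ε) {d : ℕ} {f : (Fin d → ℝ) → ℝ}
    {D : ℕ → Fin d → (Fin d → ℝ) → ℝ} (hf : HasBoundedPartials f D)
    (hfε : ∀ x, f x ∈ Icc ε (1 - ε)) :
    isoProfile (∫ x, f x ∂_root_.stdGaussian d) ≤
      ∫ x, √(isoProfile (f x) ^ 2 + ∑ i, D 1 i x ^ 2) ∂_root_.stdGaussian d := by
  induction d with
  | zero =>
    rw [_root_.stdGaussian, Measure.pi_of_empty]
    simp [Real.sqrt_sq (isoProfile_pos _).le]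
  | succ d ih =>
    have hbdd := hf.bddContOn_sqrt hε hfε
    have hmean : ∀ x, ∫ y, f (Fin.cons y x) ∂γ ∈ Icc ε (1 - ε) := fun x ↦
      (convex_Icc ε (1 - ε)).integral_mem isClosed_Icc (ae_of_all _ fun y ↦ hfε _)
        (hf.bddContOn.comp_cons x).integrable
    rw [integral_stdGaussian_succ hf.bddContOn, integral_stdGaussian_succ hbdd]
    exact (ih hf.integral_cons hmean).trans <|
      integral_mono (hf.integral_cons.bddContOn_sqrt hε hmean).integrable
        hbdd.integral_cons.integrable (hf.sqrt_isoProfile_integral_cons_le hε hfε)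

end Tensorization

section SmoothLipschitz

open scoped ContDiff Convolution NNReal

section Approximation

variable {E : Type*} [NormedAddCommGroup E] [NormedSpace ℝ E] [FiniteDimensional ℝ E]
  {F : E → ℝ} {L : ℝ≥0}

lemma lipschitzWith_normed_convolution [MeasurableSpace E] [BorelSpace E] {μ : Measure E}
    [μ.IsAddHaarMeasure] (ρ : ContDiffBump (0 : E)) (hF : LipschitzWith L F) :
    LipschitzWith L (ρ.normed μ ⋆[ContinuousLinearMap.lsmul ℝ ℝ, μ] F) := by
  have hint : ∀ x, Integrable (fun t ↦ ρ.normed μ t * F (x - t)) μ := fun x ↦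
    (ρ.continuous_normed.mul (hF.continuous.comp (by fun_prop))).integrable_of_hasCompactSupport
      ρ.hasCompactSupport_normed.mul_right
  refine LipschitzWith.of_dist_le_mul fun x y ↦ ?_
  simp only [convolution_def, ContinuousLinearMap.lsmul_apply, smul_eq_mul]
  rw [dist_eq_norm, ← integral_sub (hint x) (hint y)]
  calc ‖∫ t, (ρ.normed μ t * F (x - t) - ρ.normed μ t * F (y - t)) ∂μ‖
      ≤ ∫ t, ρ.normed μ t * (L * dist x y) ∂μ := by
        refine norm_integral_le_of_norm_le (ρ.integrable_normed.mul_const _)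
          (ae_of_all _ fun t ↦ ?_)
        rw [← mul_sub, norm_mul, Real.norm_of_nonneg (ρ.nonneg_normed t)]
        refine mul_le_mul_of_nonneg_left ?_ (ρ.nonneg_normed t)
        simpa [dist_eq_norm] using hF.dist_le_mul (x - t) (y - t)
    _ = L * dist x y := by rw [integral_mul_const, ρ.integral_normed, one_mul]

lemma exists_contDiff_lipschitzWith_dist_le (hF : LipschitzWith L F) (hs : HasCompactSupport F)
    {ε : ℝ} (hε : 0 < ε) :
    ∃ G : E → ℝ, ContDiff ℝ ∞ G ∧ HasCompactSupport G ∧ LipschitzWith L G ∧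
      ∀ x, dist (G x) (F x) ≤ ε := by
  borelize E
  let μ : Measure E := Measure.addHaar
  have hr : 0 < ε / (L + 1) := by positivity
  let ρ : ContDiffBump (0 : E) := ⟨ε / (L + 1) / 2, ε / (L + 1), half_pos hr, half_lt_self hr⟩
  refine ⟨ρ.normed μ ⋆[ContinuousLinearMap.lsmul ℝ ℝ, μ] F,
    ρ.hasCompactSupport_normed.contDiff_convolution_left _ ρ.contDiff_normed
      hF.continuous.locallyIntegrable,
    ρ.hasCompactSupport_normed.convolution _ hs, lipschitzWith_normed_convolution ρ hF,
    fun x ↦ ρ.dist_normed_convolution_le hF.continuous.aestronglyMeasurable fun y hy ↦ ?_⟩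
  calc dist (F y) (F x) ≤ L * dist y x := hF.dist_le_mul y x
    _ ≤ (L + 1) * (ε / (L + 1)) := by
        gcongr
        exacts [le_add_of_nonneg_right zero_le_one, (Metric.mem_ball.1 hy).le]
    _ = ε := mul_div_cancel₀ ε (by positivity)

lemma exists_hasCompactSupport_lipschitzWith_tendsto (hL : 0 < L) (hF : LipschitzWith L F) :
    ∃ G : ℕ → E → ℝ, (∀ n, HasCompactSupport (G n) ∧ LipschitzWith L (G n)) ∧
      ∀ x, ∀ᶠ n in atTop, G n x = F x := by
  let κ : ℕ → E → ℝ := fun n x ↦ max (n - L * ‖x‖) 0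
  have hκ : ∀ n, LipschitzWith L (κ n) := fun n ↦ by
    refine LipschitzWith.max_const (LipschitzWith.of_dist_le_mul fun x y ↦ ?_) 0
    rw [Real.dist_eq, sub_sub_sub_cancel_left, ← mul_sub, abs_mul, abs_of_nonneg L.coe_nonneg,
      dist_comm, dist_eq_norm]
    gcongr
    exact abs_norm_sub_norm_le y x
  refine ⟨fun n x ↦ max (-κ n x) (min (F x) (κ n x)), fun n ↦ ⟨?_, ?_⟩, fun x ↦ ?_⟩
  · refine HasCompactSupport.of_support_subset_isCompact
      (isCompact_closedBall (0 : E) (n / L)) fun x hx ↦ ?_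
    rw [mem_closedBall_zero_iff, le_div_iff₀' (by exact_mod_cast hL)]
    by_contra! h
    have : κ n x = 0 := max_eq_right (by linarith)
    exact hx (by simp [this])
  · simpa using (hκ n).neg.max (hF.min (hκ n))
  · filter_upwards [eventually_ge_atTop ⌈|F x| + L * ‖x‖⌉₊] with n hn
    have h : |F x| ≤ κ n x := le_max_of_le_left (by linarith [Nat.ceil_le.1 hn])
    rw [min_eq_left (abs_le.1 h).2, max_eq_right (abs_le.1 h).1]

lemma exists_contDiff_lipschitzWith_tendsto (hL : 0 < L) (hF : LipschitzWith L F) :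
    ∃ G : ℕ → E → ℝ,
      (∀ n, ContDiff ℝ ∞ (G n) ∧ HasCompactSupport (G n) ∧ LipschitzWith L (G n)) ∧
      ∀ x, Tendsto (fun n ↦ G n x) atTop (𝓝 (F x)) := by
  obtain ⟨F', hF', hlim⟩ := exists_hasCompactSupport_lipschitzWith_tendsto hL hF
  choose G hGs hGc hGl hGd using fun n ↦ exists_contDiff_lipschitzWith_dist_le (hF' n).2 (hF' n).1
    (Nat.one_div_pos_of_nat (n := n) (α := ℝ))
  refine ⟨G, fun n ↦ ⟨hGs n, hGc n, hGl n⟩, fun x ↦ tendsto_iff_dist_tendsto_zero.2 ?_⟩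
  refine squeeze_zero' (Eventually.of_forall fun n ↦ dist_nonneg) ?_
    (tendsto_one_div_add_atTop_nhds_zero_nat (𝕜 := ℝ))
  filter_upwards [hlim x] with n hn
  exact hn ▸ hGd n x

end Approximation

section Iterate

variable {E : Type*} [NormedAddCommGroup E] [NormedSpace ℝ E] {v : E → ℝ}

lemma contDiff_iterate_fderiv_apply (hv : ContDiff ℝ ∞ v) (e : E) (j : ℕ) :
    ContDiff ℝ ∞ ((fun w y ↦ fderiv ℝ w y e)^[j] v) := by
  induction j with
  | zero => exact hv
  | succ j ih =>
    rw [Function.iterate_succ_apply']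
    exact (ih.fderiv_right (by simp)).clm_apply contDiff_const

lemma hasCompactSupport_iterate_fderiv_apply (hv : HasCompactSupport (fderiv ℝ v)) (e : E)
    (j : ℕ) : HasCompactSupport ((fun w y ↦ fderiv ℝ w y e)^[j + 1] v) := by
  induction j with
  | zero => exact hv.comp_left (g := fun ℓ : E →L[ℝ] ℝ ↦ ℓ e) (by simp)
  | succ j ih =>
    rw [Function.iterate_succ_apply']
    exact ih.fderiv_apply (𝕜 := ℝ) e

end Iterate

section EuclideanSpace

variable {d : ℕ} {v : EuclideanSpace ℝ (Fin d) → ℝ}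

lemma hasDerivAt_comp_toLp_update (hv : Differentiable ℝ v) (i : Fin d) (x : Fin d → ℝ) :
    HasDerivAt (fun s ↦ v (WithLp.toLp 2 (Function.update x i s)))
      (fderiv ℝ v (WithLp.toLp 2 x) (EuclideanSpace.single i 1)) (x i) := by
  let e := (PiLp.continuousLinearEquiv 2 ℝ fun _ : Fin d ↦ ℝ).symm
  have hv' : HasFDerivAt v (fderiv ℝ v (WithLp.toLp 2 x)) ((e ∘ Function.update x i) (x i)) := by
    simpa [e] using (hv (WithLp.toLp 2 x)).hasFDerivAt
  exact hv'.comp_hasDerivAt (x i) <|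
    e.hasFDerivAt.comp_hasDerivAt (x i) (hasDerivAt_update x i (x i))

lemma sum_sq_apply_single_le (ℓ : EuclideanSpace ℝ (Fin d) →L[ℝ] ℝ) :
    ∑ i, ℓ (EuclideanSpace.single i 1) ^ 2 ≤ ‖ℓ‖ ^ 2 := by
  let w := (InnerProductSpace.toDual ℝ (EuclideanSpace ℝ (Fin d))).symm ℓ
  have hw : ∀ i, ℓ (EuclideanSpace.single i 1) = w i := fun i ↦ by
    rw [← InnerProductSpace.toDual_symm_apply (𝕜 := ℝ) (y := ℓ), EuclideanSpace.inner_single_right]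
    simp [w]
  simp only [hw]
  rw [← EuclideanSpace.real_norm_sq_eq, LinearIsometryEquiv.norm_map]

lemma BddContOn.comp_toLp (hv : BddContOn v univ) :
    BddContOn (fun x : Fin d → ℝ ↦ v (WithLp.toLp 2 x)) univ :=
  hv.comp_continuous (PiLp.continuous_toLp 2 _) fun _ _ ↦ trivial

lemma hasBoundedPartials_comp_toLp (hv : ContDiff ℝ ∞ v) (hb : BddContOn v univ)
    (hs : HasCompactSupport (fderiv ℝ v)) :
    HasBoundedPartials (fun x ↦ v (WithLp.toLp 2 x)) fun j i x ↦
      (fun w y ↦ fderiv ℝ w y (EuclideanSpace.single i 1))^[j] v (WithLp.toLp 2 x) where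
  bddContOn := hb.comp_toLp
  zero _ := rfl
  hasDerivAt j i x := by
    rw [Function.iterate_succ_apply']
    exact hasDerivAt_comp_toLp_update
      ((contDiff_iterate_fderiv_apply hv _ j).differentiable (by simp)) i x
  bddContOn_partial
    | 0, _ => hb.comp_toLp
    | j + 1, i => by
      have hcont := (contDiff_iterate_fderiv_apply hv (.single i 1) (j + 1)).continuous
      obtain ⟨C, hC⟩ :=
        (hasCompactSupport_iterate_fderiv_apply hs _ j).exists_bound_of_continuous hcont
      exact BddContOn.comp_toLp ⟨hcont.continuousOn, C, fun x _ ↦ hC x⟩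

end EuclideanSpace

end SmoothLipschitz

section GaussianFunctional

open scoped ContDiff NNReal

lemma gaussianPDFReal_std_le (y : ℝ) : φ y ≤ φ 0 := by
  simp only [gaussianPDFReal_def, NNReal.coe_one, mul_one]
  gcongr ?_ * Real.exp ?_
  linarith [sq_nonneg (y - 0)]

lemma contDiff_Phi : ContDiff ℝ ∞ Phi := by
  rw [contDiff_infty_iff_deriv, funext fun x ↦ (hasDerivAt_Phi x).deriv]
  refine ⟨fun x ↦ (hasDerivAt_Phi x).differentiableAt, ?_⟩
  rw [gaussianPDFReal_def]
  fun_prop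

section Integral

variable {X : Type*} [TopologicalSpace X] {u : X → ℝ}

lemma bddContOn_Phi_comp (hu : Continuous u) : BddContOn (fun x ↦ Phi (u x)) univ :=
  ⟨(continuous_Phi.comp hu).continuousOn, 1, fun x _ ↦ by
    simpa only [Real.norm_of_nonneg (Phi_pos _).le] using (Phi_lt_one _).le⟩

lemma bddContOn_gaussianPDFReal_comp (hu : Continuous u) : BddContOn (fun x ↦ φ (u x)) univ :=
  ⟨(continuous_gaussianPDFReal_std.comp hu).continuousOn, φ 0, fun x _ ↦ by
    simpa only [Real.norm_of_nonneg (gaussianPDFReal_std_pos _).le] using gaussianPDFReal_std_le _⟩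

variable [MeasurableSpace X] [OpensMeasurableSpace X] {μ : Measure X}

lemma integral_Phi_mem_Ioo [IsProbabilityMeasure μ]
    (hu : Continuous u) : ∫ x, Phi (u x) ∂μ ∈ Ioo 0 1 := by
  have hpos : ∀ {w : X → ℝ}, Continuous w → 0 < ∫ x, Phi (w x) ∂μ := fun {w} hw ↦ by
    refine (integral_pos_iff_support_of_nonneg (fun x ↦ (Phi_pos _).le)
      (bddContOn_Phi_comp hw).integrable).2 ?_
    rw [Function.support_eq_univ fun x ↦ (Phi_pos _).ne', measure_univ]
    exact one_pos
  have hneg : ∫ x, Phi (-u x) ∂μ = 1 - ∫ x, Phi (u x) ∂μ := by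
    simp only [Phi_neg]
    rw [integral_sub (integrable_const _) (bddContOn_Phi_comp hu).integrable]
    simp
  exact ⟨hpos hu, sub_pos.1 (hneg ▸ hpos hu.neg)⟩

lemma hasDerivAt_integral_Phi_sub [IsFiniteMeasure μ] (hu : Continuous u) (s : ℝ) :
    HasDerivAt (fun s ↦ ∫ x, Phi (u x - s) ∂μ) (-∫ x, φ (u x - s) ∂μ) s := by
  rw [← integral_neg]
  have hcont : ∀ s, Continuous fun x ↦ u x - s := fun s ↦ by fun_prop
  refine (hasDerivAt_integral_of_dominated_loc_of_deriv_le (F' := fun s x ↦ -φ (u x - s))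
    (bound := fun _ ↦ φ 0) univ_mem
    (Eventually.of_forall fun s ↦ (bddContOn_Phi_comp (hcont s)).integrable.aestronglyMeasurable)
    (bddContOn_Phi_comp (hcont s)).integrable
    (bddContOn_gaussianPDFReal_comp (hcont s)).integrable.neg.aestronglyMeasurable
    (ae_of_all _ fun x s _ ↦ ?_) (integrable_const _) (ae_of_all _ fun x s _ ↦ ?_)).2
  · rw [norm_neg, Real.norm_of_nonneg (gaussianPDFReal_std_pos _).le]
    exact gaussianPDFReal_std_le _
  · simpa [Function.comp_def] using
      (hasDerivAt_Phi _).comp s ((hasDerivAt_id s).const_sub (u x))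

end Integral

variable {d : ℕ} {u : EuclideanSpace ℝ (Fin d) → ℝ} {L : ℝ≥0}

lemma fderiv_Phi_comp (hu : Differentiable ℝ u) :
    fderiv ℝ (fun x ↦ Phi (u x)) = fun x ↦ φ (u x) • fderiv ℝ u x :=
  funext fun x ↦ ((hasDerivAt_Phi (u x)).comp_hasFDerivAt x (hu x).hasFDerivAt).fderiv

lemma sqrt_isoProfile_Phi_sq_add_le (hu : Differentiable ℝ u) (hl : LipschitzWith L u)
    (x : EuclideanSpace ℝ (Fin d)) :
    √(isoProfile (Phi (u x)) ^ 2 +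
        ∑ i, fderiv ℝ (fun y ↦ Phi (u y)) x (EuclideanSpace.single i 1) ^ 2) ≤
      √(1 + L ^ 2) * φ (u x) := by
  have hgrad : ∑ i, fderiv ℝ u x (EuclideanSpace.single i 1) ^ 2 ≤ (L : ℝ) ^ 2 :=
    (sum_sq_apply_single_le _).trans <|
      pow_le_pow_left₀ (norm_nonneg _) (norm_fderiv_le_of_lipschitz ℝ hl) 2
  rw [← Real.sqrt_sq (gaussianPDFReal_std_pos (u x)).le, ← Real.sqrt_mul (by positivity)]
  refine Real.sqrt_le_sqrt ?_
  simp only [isoProfile_Phi, fderiv_Phi_comp hu, FunLike.coe_smul, Pi.smul_apply, smul_eq_mul,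
    mul_pow]
  rw [← Finset.mul_sum]
  nlinarith [mul_le_mul_of_nonneg_left hgrad (sq_nonneg (φ (u x)))]

lemma isoProfile_integral_Phi_le_of_hasCompactSupport (hu : ContDiff ℝ ∞ u)
    (hs : HasCompactSupport u) (hl : LipschitzWith L u) :
    isoProfile (∫ x, Phi (u (WithLp.toLp 2 x)) ∂_root_.stdGaussian d) ≤
      √(1 + L ^ 2) * ∫ x, φ (u (WithLp.toLp 2 x)) ∂_root_.stdGaussian d := by
  have hdiff : Differentiable ℝ u := hu.differentiable (by simp)
  obtain ⟨M, hM⟩ := hs.exists_bound_of_continuous hu.continuous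
  have hrange : ∀ x, Phi (u x) ∈ Icc (Phi (-M)) (1 - Phi (-M)) := fun x ↦ by
    rw [Phi_neg, sub_sub_cancel, ← Phi_neg]
    exact ⟨strictMono_Phi.monotone (abs_le.1 (hM x)).1, strictMono_Phi.monotone (abs_le.1 (hM x)).2⟩
  have hfderiv : HasCompactSupport (fderiv ℝ fun x ↦ Phi (u x)) := by
    rw [fderiv_Phi_comp hdiff]
    exact HasCompactSupport.smul_left (f := fun x ↦ φ (u x)) (hs.fderiv ℝ)
  have hpart := hasBoundedPartials_comp_toLp (v := fun x ↦ Phi (u x))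
    (contDiff_Phi.comp hu) (bddContOn_Phi_comp hu.continuous) hfderiv
  rw [← integral_const_mul]
  exact (isoProfile_integral_stdGaussian_le (Phi_pos _) hpart fun x ↦ hrange _).trans <|
    integral_mono (hpart.bddContOn_sqrt (Phi_pos _) fun x ↦ hrange _).integrable
      ((bddContOn_gaussianPDFReal_comp hu.continuous).comp_toLp.integrable.const_mul _)
      fun x ↦ sqrt_isoProfile_Phi_sq_add_le hdiff hl _

theorem isoProfile_integral_Phi_le (hL : 0 < L) (hl : LipschitzWith L u) :
    isoProfile (∫ x, Phi (u (WithLp.toLp 2 x)) ∂_root_.stdGaussian d) ≤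
      √(1 + L ^ 2) * ∫ x, φ (u (WithLp.toLp 2 x)) ∂_root_.stdGaussian d := by
  obtain ⟨G, hG, hlim⟩ := exists_contDiff_lipschitzWith_tendsto hL hl
  have hcont : ∀ n, Continuous (G n) := fun n ↦ (hG n).1.continuous
  have hPhi : Tendsto (fun n ↦ ∫ x, Phi (G n (WithLp.toLp 2 x)) ∂_root_.stdGaussian d) atTop
      (𝓝 (∫ x, Phi (u (WithLp.toLp 2 x)) ∂_root_.stdGaussian d)) :=
    tendsto_integral_of_dominated_convergence (fun _ ↦ 1)
      (fun n ↦ (bddContOn_Phi_comp (hcont n)).comp_toLp.continuous.aestronglyMeasurable)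
      (integrable_const _)
      (fun n ↦ ae_of_all _ fun x ↦ by
        simpa only [Real.norm_of_nonneg (Phi_pos _).le] using (Phi_lt_one _).le)
      (ae_of_all _ fun x ↦ (continuous_Phi.tendsto _).comp (hlim _))
  have hphi : Tendsto (fun n ↦ ∫ x, φ (G n (WithLp.toLp 2 x)) ∂_root_.stdGaussian d) atTop
      (𝓝 (∫ x, φ (u (WithLp.toLp 2 x)) ∂_root_.stdGaussian d)) :=
    tendsto_integral_of_dominated_convergence (fun _ ↦ φ 0)
      (fun n ↦ (bddContOn_gaussianPDFReal_comp (hcont n)).comp_toLp.continuous.aestronglyMeasurable)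
      (integrable_const _)
      (fun n ↦ ae_of_all _ fun x ↦ by
        simpa only [Real.norm_of_nonneg (gaussianPDFReal_std_pos _).le] using
          gaussianPDFReal_std_le _)
      (ae_of_all _ fun x ↦ (continuous_gaussianPDFReal_std.tendsto _).comp (hlim _))
  have hmean : ∫ x, Phi (u (WithLp.toLp 2 x)) ∂_root_.stdGaussian d ∈ Ioo 0 1 :=
    integral_Phi_mem_Ioo (hl.continuous.comp (PiLp.continuous_toLp 2 _))
  exact le_of_tendsto_of_tendsto' ((hasDerivAt_isoProfile hmean).continuousAt.tendsto.comp hPhi)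
    (hphi.const_mul _) fun n ↦
      isoProfile_integral_Phi_le_of_hasCompactSupport (hG n).1 (hG n).2.1 (hG n).2.2

lemma antitone_PhiInv_integral_Phi_sub_add (hL : 0 < L) (hl : LipschitzWith L u) :
    Antitone fun s ↦
      PhiInv (∫ x, Phi (u (WithLp.toLp 2 x) - s) ∂_root_.stdGaussian d) + s / √(1 + L ^ 2) := by
  have hcont : Continuous fun x ↦ u (WithLp.toLp 2 x) :=
    hl.continuous.comp (PiLp.continuous_toLp 2 _)
  have hmean : ∀ s, ∫ x, Phi (u (WithLp.toLp 2 x) - s) ∂_root_.stdGaussian d ∈ Ioo 0 1 :=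
    fun s ↦ integral_Phi_mem_Ioo (hcont.sub continuous_const)
  refine antitone_of_hasDerivAt_nonpos (fun s ↦ ((hasDerivAt_PhiInv (hmean s)).comp s
    (hasDerivAt_integral_Phi_sub hcont s)).add ((hasDerivAt_id s).div_const _)) fun s ↦ ?_
  have hl' : LipschitzWith L fun y ↦ u y - s := by simpa using hl.sub (LipschitzWith.const s)
  have h := isoProfile_integral_Phi_le hL hl'
  have hI := isoProfile_pos (∫ x, Phi (u (WithLp.toLp 2 x) - s) ∂_root_.stdGaussian d)
  have hsqrt : 0 < √(1 + (L : ℝ) ^ 2) := by positivity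
  change (isoProfile _)⁻¹ * -_ + 1 / _ ≤ (0 : ℝ)
  rw [mul_neg, neg_add_nonpos_iff, inv_mul_eq_div, div_le_div_iff₀ hsqrt hI]
  linarith

theorem integral_Phi_sub_le (hL : 0 < L) (hl : LipschitzWith L u) {b c : ℝ} (hc : 0 ≤ c)
    (hb : ∫ x, Phi (u (WithLp.toLp 2 x)) ∂_root_.stdGaussian d ≤ Phi b) :
    ∫ x, Phi (u (WithLp.toLp 2 x) - c) ∂_root_.stdGaussian d ≤ Phi (b - c / √(1 + L ^ 2)) := by
  have hmean : ∀ s, ∫ x, Phi (u (WithLp.toLp 2 x) - s) ∂_root_.stdGaussian d ∈ Ioo 0 1 :=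
    fun s ↦ integral_Phi_mem_Ioo <|
      (hl.continuous.comp (PiLp.continuous_toLp 2 _)).sub continuous_const
  have hanti := antitone_PhiInv_integral_Phi_sub_add hL hl hc
  simp only [sub_zero, zero_div, add_zero] at hanti
  have hPhiInv : PhiInv (∫ x, Phi (u (WithLp.toLp 2 x)) ∂_root_.stdGaussian d) ≤ b := by
    rwa [← strictMono_Phi.le_iff_le, Phi_PhiInv (by simpa only [sub_zero] using hmean 0)]
  rw [← Phi_PhiInv (hmean c)]
  exact strictMono_Phi.monotone (by linarith)

end GaussianFunctional

section Isoperimetry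

open scoped NNReal

variable {d : ℕ}

lemma l2_sub (z z' : Fin d → ℝ) :
    l2 (z - z') = dist (WithLp.toLp 2 z : EuclideanSpace ℝ (Fin d)) (WithLp.toLp 2 z') := by
  simp [l2, EuclideanSpace.dist_eq, Real.dist_eq, sq_abs]

/-- The points that stay in `U` under every perturbation of Euclidean norm at most `r`. -/
def erosion (r : ℝ) (U : Set (Fin d → ℝ)) : Set (Fin d → ℝ) :=
  {z | ∀ z', l2 (z - z') ≤ r → z' ∈ U}

variable {U : Set (Fin d → ℝ)} {r : ℝ}

lemma erosion_subset (hr : 0 ≤ r) : erosion r U ⊆ U := fun z hz ↦ hz z (by simpa [l2] using hr)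

lemma le_infDist_of_mem_erosion (hU : Uᶜ.Nonempty) {z : Fin d → ℝ} (hz : z ∈ erosion r U) :
    r ≤ Metric.infDist (WithLp.toLp 2 z) (WithLp.toLp 2 '' Uᶜ) := by
  refine (Metric.le_infDist (hU.image _)).2 ?_
  rintro _ ⟨z', hz', rfl⟩
  rw [← l2_sub]
  by_contra! h
  exact hz' (hz z' h.le)

section Layer

variable {X : Type*} [TopologicalSpace X] [MeasurableSpace X] [OpensMeasurableSpace X]
  {μ : Measure X} {u : X → ℝ} {S : Set X} {s : ℝ}

lemma integral_Phi_le_measureReal_add [IsProbabilityMeasure μ] (hu : Continuous u)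
    (hS : MeasurableSet S) (hs : ∀ x ∉ S, u x ≤ s) : ∫ x, Phi (u x) ∂μ ≤ μ.real S + Phi s := by
  calc ∫ x, Phi (u x) ∂μ ≤ ∫ x, (S.indicator 1 x + Phi s) ∂μ := by
        refine integral_mono (bddContOn_Phi_comp hu).integrable
          (((integrable_const _).indicator hS).add (integrable_const _)) fun x ↦ ?_
        by_cases hx : x ∈ S
        · simp only [indicator_of_mem hx, Pi.one_apply]
          linarith [Phi_lt_one (u x), Phi_pos s]
        · simpa only [indicator_of_notMem hx, zero_add] using strictMono_Phi.monotone (hs x hx)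
    _ = μ.real S + Phi s := by
        rw [integral_add ((integrable_const _).indicator hS) (integrable_const _),
          integral_indicator_one hS]
        simp

lemma Phi_mul_measureReal_le_integral_Phi [IsFiniteMeasure μ] (hu : Continuous u)
    (hs : ∀ x ∈ S, s ≤ u x) :
    Phi s * μ.real S ≤ ∫ x, Phi (u x) ∂μ :=
  (mul_le_mul_of_nonneg_left (measureReal_mono fun x hx ↦ strictMono_Phi.monotone (hs x hx))
    (Phi_pos s).le).trans <|
    mul_meas_ge_le_integral_of_nonneg (ae_of_all _ fun _ ↦ (Phi_pos _).le)
      (bddContOn_Phi_comp hu).integrable _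

end Layer

lemma Phi_mul_measureReal_erosion_le (hU : MeasurableSet U) (hUc : Uᶜ.Nonempty) {L : ℝ≥0}
    (hL : 0 < L) {b t : ℝ} (ht : 2 * t ≤ L * r)
    (hb : (_root_.stdGaussian d).real U + Phi (-t) ≤ Phi b) :
    Phi t * (_root_.stdGaussian d).real (erosion r U) ≤
      Phi (b - (L * r - 2 * t) / √(1 + L ^ 2)) := by
  let u : EuclideanSpace ℝ (Fin d) → ℝ := fun x ↦ L * Metric.infDist x (WithLp.toLp 2 '' Uᶜ) - t
  have hu : LipschitzWith L u := LipschitzWith.of_dist_le_mul fun x y ↦ by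
    simp only [u, Real.dist_eq, sub_sub_sub_cancel_right]
    rw [← mul_sub, abs_mul, abs_of_nonneg L.coe_nonneg]
    gcongr
    simpa [Real.dist_eq] using (Metric.lipschitz_infDist_pt _).dist_le_mul x y
  have hcont : Continuous fun z ↦ u (WithLp.toLp 2 z) :=
    hu.continuous.comp (PiLp.continuous_toLp 2 _)
  have hupper : ∫ z, Phi (u (WithLp.toLp 2 z)) ∂_root_.stdGaussian d ≤ Phi b :=
    (integral_Phi_le_measureReal_add hcont hU fun z hz ↦ by
      have hz' : WithLp.toLp 2 z ∈ WithLp.toLp 2 '' Uᶜ := mem_image_of_mem _ hz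
      simp [u, Metric.infDist_zero_of_mem hz']).trans hb
  refine le_trans ?_ (integral_Phi_sub_le hL hu (sub_nonneg.2 ht) hupper)
  refine Phi_mul_measureReal_le_integral_Phi (hcont.sub continuous_const) fun z hz ↦ ?_
  have := mul_le_mul_of_nonneg_left (le_infDist_of_mem_erosion hUc hz) L.coe_nonneg
  simp only [u]
  linarith

lemma tendsto_sq_mul_sub_div_sqrt (r : ℝ) :
    Tendsto (fun k : ℝ ↦ (k ^ 2 * r - 2 * k) / √(1 + (k ^ 2) ^ 2)) atTop (𝓝 r) := by
  have hcont : Continuous fun x : ℝ ↦ (r - 2 * x) / √(x ^ 4 + 1) :=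
    .div (by fun_prop) (by fun_prop) fun x ↦ by positivity
  have hlim := (hcont.tendsto 0).comp tendsto_inv_atTop_zero
  norm_num at hlim
  refine hlim.congr' ?_
  filter_upwards [eventually_gt_atTop 0] with k hk
  have hsqrt : √(1 + (k ^ 2) ^ 2) = k ^ 2 * √(k⁻¹ ^ 4 + 1) := by
    rw [← Real.sqrt_sq (sq_nonneg k), ← Real.sqrt_mul (by positivity), Real.sqrt_sq (sq_nonneg k)]
    congr 1
    field_simp
  rw [hsqrt, Function.comp_apply]
  field_simp

lemma measureReal_erosion_le_of_lt (hU : MeasurableSet U) (hr : 0 < r) {b : ℝ}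
    (hb : (_root_.stdGaussian d).real U < Phi b) :
    (_root_.stdGaussian d).real (erosion r U) ≤ Phi (b - r) := by
  have hUc : Uᶜ.Nonempty := by
    by_contra! h
    rw [compl_empty_iff.1 h, probReal_univ] at hb
    exact hb.not_gt (Phi_lt_one b)
  have hlhs : Tendsto (fun k ↦ Phi k * (_root_.stdGaussian d).real (erosion r U)) atTop
      (𝓝 ((_root_.stdGaussian d).real (erosion r U))) := by
    simpa only [one_mul] using tendsto_Phi_atTop.mul_const _
  have hrhs := (continuous_Phi.tendsto _).comp ((tendsto_sq_mul_sub_div_sqrt r).const_sub b)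
  have hbound : Tendsto (fun k ↦ (_root_.stdGaussian d).real U + Phi (-k)) atTop
      (𝓝 ((_root_.stdGaussian d).real U)) := by
    simpa only [add_zero, Function.comp_def] using
      (tendsto_Phi_atBot.comp tendsto_neg_atTop_atBot).const_add _
  refine le_of_tendsto_of_tendsto hlhs hrhs ?_
  filter_upwards [hbound.eventually_le_const hb, eventually_gt_atTop 0,
    eventually_ge_atTop (2 / r)] with k hkb hk0 hkr
  have hL : 0 < (k ^ 2).toNNReal := Real.toNNReal_pos.2 (by positivity)
  have h := Phi_mul_measureReal_erosion_le (r := r) hU hUc hL (t := k) (b := b)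
  simp only [Real.coe_toNNReal _ (sq_nonneg k)] at h
  refine h ?_ hkb
  rw [div_le_iff₀ hr] at hkr
  nlinarith

theorem measureReal_erosion_le (hU : MeasurableSet U) (hr : 0 ≤ r) {a : ℝ}
    (ha : (_root_.stdGaussian d).real U ≤ Phi a) :
    (_root_.stdGaussian d).real (erosion r U) ≤ Phi (a - r) := by
  rcases hr.eq_or_lt with rfl | hr
  · simpa using (measureReal_mono (erosion_subset le_rfl)).trans ha
  have hlim : Tendsto (fun b ↦ Phi (b - r)) (𝓝[>] a) (𝓝 (Phi (a - r))) :=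
    ((continuous_Phi.comp (continuous_sub_right r)).tendsto a).mono_left nhdsWithin_le_nhds
  refine ge_of_tendsto hlim (eventually_mem_nhdsWithin.mono fun b hb ↦ ?_)
  exact measureReal_erosion_le_of_lt hU hr (ha.trans_lt (strictMono_Phi hb))

lemma measureReal_erosion_le_exp_mul (hU : MeasurableSet U)
    (hhalf : (_root_.stdGaussian d).real U ≤ 1 / 2) (hr : 0 ≤ r) :
    (_root_.stdGaussian d).real (erosion r U) ≤
      Real.exp (-r ^ 2 / 2) * (_root_.stdGaussian d).real U := by
  rcases (measureReal_nonneg (μ := _root_.stdGaussian d) (s := U)).eq_or_lt with h0 | h0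
  · rw [← h0, mul_zero]
    exact (measureReal_mono (erosion_subset hr)).trans h0.ge
  obtain ⟨a, ha⟩ := exists_Phi_eq ⟨h0, hhalf.trans_lt one_half_lt_one⟩
  have ha0 : a ≤ 0 := by rwa [← strictMono_Phi.le_iff_le, Phi_zero, ha]
  calc (_root_.stdGaussian d).real (erosion r U) ≤ Phi (a - r) :=
        measureReal_erosion_le hU hr ha.ge
    _ ≤ Real.exp (-r ^ 2 / 2) * Phi a := Phi_sub_le ha0 hr
    _ = Real.exp (-r ^ 2 / 2) * (_root_.stdGaussian d).real U := by rw [ha]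

end Isoperimetry

section Transferability

variable {α ι : Type*} {A B : ι → Set α}

/-- The points at which the labellings with cells `A` and `B` differ, encoded as lying in some
`A i` but not in the corresponding `B i`. -/
def disagreement (A B : ι → Set α) : Set α := {z | ∃ i, z ∈ A i ∧ z ∉ B i}

lemma eq_of_mem_of_mem (hA : Pairwise (Function.onFun Disjoint A)) {i j : ι} {z : α}
    (hi : z ∈ A i) (hj : z ∈ A j) : i = j :=
  hA.eq (not_disjoint_iff.2 ⟨z, hi, hj⟩)

lemma sdiff_subset_disagreement (hB : Pairwise (Function.onFun Disjoint B))
    (hA : ⋃ i, A i = univ) (i : ι) : B i \ A i ⊆ disagreement A B := fun z hz ↦ by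
  obtain ⟨j, hj⟩ := mem_iUnion.1 (hA.ge (mem_univ z))
  refine ⟨j, hj, fun hj' ↦ hz.2 ?_⟩
  rwa [eq_of_mem_of_mem hB hz.1 hj']

section Measure

variable [MeasurableSpace α] {μ : Measure α}

lemma tsum_measure_union_le [Countable ι] (hmA : ∀ i, MeasurableSet (A i))
    (hmB : ∀ i, MeasurableSet (B i)) (hA : Pairwise (Function.onFun Disjoint A))
    (hB : Pairwise (Function.onFun Disjoint B)) (hcover : ⋃ i, A i = univ) :
    ∑' i, μ (A i ∪ B i) ≤ μ univ + μ (disagreement A B) := by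
  calc ∑' i, μ (A i ∪ B i) ≤ ∑' i, (μ (A i) + μ (B i \ A i)) := by
        gcongr with i
        simpa only [union_sdiff_self] using measure_union_le (μ := μ) (A i) (B i \ A i)
    _ = μ (⋃ i, A i) + μ (⋃ i, B i \ A i) := by
        rw [ENNReal.tsum_add, measure_iUnion hA hmA, measure_iUnion
          (fun i j h ↦ (hB h).mono sdiff_subset sdiff_subset) fun i ↦ (hmB i).diff (hmA i)]
    _ ≤ μ univ + μ (disagreement A B) := by
        rw [hcover]
        gcongr
        exact iUnion_subset (sdiff_subset_disagreement hB hcover)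

lemma measureReal_union_le_add_disagreement [IsFiniteMeasure μ]
    (hB : Pairwise (Function.onFun Disjoint B)) (hcover : ⋃ i, A i = univ) (i : ι) :
    μ.real (A i ∪ B i) ≤ μ.real (A i) + μ.real (disagreement A B) := by
  rw [← union_sdiff_self]
  exact (measureReal_union_le _ _).trans <|
    add_le_add_right (measureReal_mono (sdiff_subset_disagreement hB hcover i)) _

end Measure

variable {d : ℕ} {Bf Bh : ι → Set (Fin d → ℝ)} {η δ : ℝ}

/-- The points that some perturbation of Euclidean norm at most `η` moves out of both of their
cells, the one in `Bf` and the one in `Bh`. -/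
def transferSet (η : ℝ) (Bf Bh : ι → Set (Fin d → ℝ)) : Set (Fin d → ℝ) :=
  {z | ∃ z', l2 (z - z') ≤ η ∧ (∀ i, z ∈ Bf i → z' ∉ Bf i) ∧ (∀ i, z ∈ Bh i → z' ∉ Bh i)}

lemma compl_transferSet_subset (hf : Pairwise (Function.onFun Disjoint Bf))
    (hh : Pairwise (Function.onFun Disjoint Bh)) (hcover : ⋃ i, Bf i = univ) :
    (transferSet η Bf Bh)ᶜ ⊆ disagreement Bf Bh ∪ ⋃ i, erosion η (Bf i ∪ Bh i) := fun z hz ↦ by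
  by_contra! hz'
  rw [mem_union, mem_iUnion, not_or, not_exists] at hz'
  obtain ⟨hagree, herosion⟩ := hz'
  obtain ⟨i, hi⟩ := mem_iUnion.1 (hcover.ge (mem_univ z))
  have hi' : z ∈ Bh i := by_contra fun h ↦ hagree ⟨i, hi, h⟩
  refine herosion i fun z' hzz' ↦ by_contra fun h ↦ hz ⟨z', hzz', fun j hj h' ↦ h (.inl ?_),
    fun j hj h' ↦ h (.inr ?_)⟩
  · rwa [eq_of_mem_of_mem hf hi hj]
  · rwa [eq_of_mem_of_mem hh hi' hj]

lemma measureReal_iUnion_erosion_le [Countable ι] {U : ι → Set (Fin d → ℝ)}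
    (hU : ∀ i, MeasurableSet (U i)) (hhalf : ∀ i, (_root_.stdGaussian d).real (U i) ≤ 1 / 2)
    (hη : 0 ≤ η) {C : ℝ} (hC : 0 ≤ C)
    (hsum : ∑' i, _root_.stdGaussian d (U i) ≤ ENNReal.ofReal C) :
    (_root_.stdGaussian d).real (⋃ i, erosion η (U i)) ≤ Real.exp (-η ^ 2 / 2) * C := by
  refine ENNReal.toReal_le_of_le_ofReal (by positivity) ?_
  calc _root_.stdGaussian d (⋃ i, erosion η (U i))
      ≤ ∑' i, _root_.stdGaussian d (erosion η (U i)) := measure_iUnion_le _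
    _ ≤ ∑' i, ENNReal.ofReal (Real.exp (-η ^ 2 / 2)) * _root_.stdGaussian d (U i) := by
        gcongr with i
        rw [← ofReal_measureReal, ← ofReal_measureReal (s := U i),
          ← ENNReal.ofReal_mul (Real.exp_pos _).le]
        exact ENNReal.ofReal_le_ofReal (measureReal_erosion_le_exp_mul (hU i) (hhalf i) hη)
    _ ≤ ENNReal.ofReal (Real.exp (-η ^ 2 / 2) * C) := by
        rw [ENNReal.tsum_mul_left, ENNReal.ofReal_mul (Real.exp_pos _).le]
        gcongr

theorem transferability_general [Countable ι]
    (hmeasf : ∀ i, MeasurableSet (Bf i)) (hmeash : ∀ i, MeasurableSet (Bh i))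
    (hdisjf : Pairwise (Function.onFun Disjoint Bf))
    (hdisjh : Pairwise (Function.onFun Disjoint Bh)) (hcoverf : ⋃ i, Bf i = univ)
    (hδ : (_root_.stdGaussian d).real (disagreement Bf Bh) ≤ δ)
    (hhalf : ∀ i, (_root_.stdGaussian d).real (Bf i) + δ ≤ 1 / 2) (hη : 0 ≤ η) :
    1 - Real.exp (-η ^ 2 / 2) - 2 * δ ≤ (_root_.stdGaussian d).real (transferSet η Bf Bh) := by
  have hδ0 : 0 ≤ δ := measureReal_nonneg.trans hδ
  have hUhalf : ∀ i, (_root_.stdGaussian d).real (Bf i ∪ Bh i) ≤ 1 / 2 := fun i ↦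
    (measureReal_union_le_add_disagreement hdisjh hcoverf i).trans <|
      (add_le_add_right hδ _).trans (hhalf i)
  have hsum : ∑' i, _root_.stdGaussian d (Bf i ∪ Bh i) ≤ ENNReal.ofReal (1 + δ) := by
    refine (tsum_measure_union_le hmeasf hmeash hdisjf hdisjh hcoverf).trans ?_
    rw [measure_univ, ENNReal.ofReal_add zero_le_one hδ0, ENNReal.ofReal_one]
    gcongr
    exact (ENNReal.le_ofReal_iff_toReal_le (measure_ne_top _ _) hδ0).2 hδ
  have herosion := measureReal_iUnion_erosion_le (fun i ↦ (hmeasf i).union (hmeash i)) hUhalf hη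
    (by positivity) hsum
  have hcompl : (_root_.stdGaussian d).real (transferSet η Bf Bh)ᶜ ≤
      δ + Real.exp (-η ^ 2 / 2) * (1 + δ) :=
    (measureReal_mono (compl_transferSet_subset hdisjf hdisjh hcoverf)).trans <|
      (measureReal_union_le _ _).trans (add_le_add hδ herosion)
  have hone := measureReal_union_le (μ := _root_.stdGaussian d) (transferSet η Bf Bh)
    (transferSet η Bf Bh)ᶜ
  rw [union_compl_self, probReal_univ] at hone
  have hexp : Real.exp (-η ^ 2 / 2) ≤ 1 := Real.exp_le_one_iff.2 (by linarith [sq_nonneg η])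
  linarith [mul_le_mul_of_nonneg_right hexp hδ0]

end Transferability

/-- Transferability of perturbations (Theorem 3): for two partitions that agree except on
a set of measure at most `δ`, with `ν(B_i(f)) + δ ≤ 1/2`, there is, with high probability,
a single small latent perturbation changing the cell of both partitions. -/
theorem transferability (d K : ℕ)
    (Bf Bh : Fin K → Set (Fin d → ℝ))
    (hmeasf : ∀ i, MeasurableSet (Bf i)) (hmeash : ∀ i, MeasurableSet (Bh i))
    (hdisjf : Pairwise (Function.onFun Disjoint Bf))
    (hdisjh : Pairwise (Function.onFun Disjoint Bh))
    (hcoverf : (⋃ i, Bf i) = Set.univ) (hcoverh : (⋃ i, Bh i) = Set.univ)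
    (δ : ℝ)
    (hδ : ((stdGaussian d) {z | ∃ i, z ∈ Bf i ∧ z ∉ Bh i}).toReal ≤ δ)
    (hhalf : ∀ i, ((stdGaussian d) (Bf i)).toReal + δ ≤ 1 / 2)
    (η : ℝ) (hη : 0 ≤ η) :
    ((stdGaussian d)
        {z | ∃ z', l2 (z - z') ≤ η ∧
          (∀ i, z ∈ Bf i → z' ∉ Bf i) ∧ (∀ i, z ∈ Bh i → z' ∉ Bh i)}).toReal ≥
      1 - Real.sqrt (π / 2) * Real.exp (-η ^ 2 / 2) - 2 * δ := by
  have hsqrt : 1 ≤ √(π / 2) := Real.one_le_sqrt.2 (by linarith [Real.pi_gt_three])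
  exact le_trans (by nlinarith [Real.exp_pos (-η ^ 2 / 2)])
    (transferability_general hmeasf hmeash hdisjf hdisjh hcoverf hδ hhalf hη)
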